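/- arXiv:math/0303370 — 10 statements merged into one kernel-verified Lean document; each statement's English description precedes it below -/
import Mathlib

section
/- Exchange Lemma: Let A, B, C, Q, R, S be n×n complex matrices. Then the operator identity X_A Δ_B X_C = Δ_Q X_R Δ_S holds, i.e. A·(B∘(C·M)) = Q∘(R·(S∘M)) for every n×n complex matrix M, if and only if the operator identity X_A Δ_C X_B = Δ_R X_Q Δ_{Sᵀ} holds, i.e. A·(C∘(B·M)) = R∘(Q·(Sᵀ∘M)) for every n×n complex matrix M. -/
open Matrix

variable {m : Type*} [Fintype m] [DecidableEq m]

/-- The Schur (entrywise) inverse `A^(-)` of a matrix: `(A^(-))_{ij} = (A_{ij})⁻¹`. -/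
noncomputable def sinv (A : Matrix m m ℂ) : Matrix m m ℂ := Matrix.of fun i j => (A i j)⁻¹

/-- A type-II matrix: a Schur invertible matrix `W` with `W * (W^(-))ᵀ = n • I`,
where `n` is the size of the matrix. -/
def IsTypeII (A : Matrix m m ℂ) : Prop :=
  (∀ i j, A i j ≠ 0) ∧ A * (sinv A)ᵀ = (Fintype.card m : ℂ) • (1 : Matrix m m ℂ)

/-- `v_{ij} = (A e_i) ∘ (B e_j)`: the entrywise product of column `i` of `A`
with column `j` of `B`. -/
def colProd (A B : Matrix m m ℂ) (i j : m) : m → ℂ := fun k => A k i * B k j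

/-- Membership in the Nomura algebra `N_{A,B}`: every `v_{ij}` is an eigenvector of `M`. -/
def InNomura (A B M : Matrix m m ℂ) : Prop :=
  ∀ i j, ∃ c : ℂ, M.mulVec (colProd A B i j) = c • colProd A B i j

/-- `S = Θ_{A,B}(M)`: the matrix of eigenvalues, i.e. `M v_{ij} = S_{ij} v_{ij}` for all `i,j`. -/
def IsTheta (A B M S : Matrix m m ℂ) : Prop :=
  ∀ i j, M.mulVec (colProd A B i j) = S i j • colProd A B i j

/-- `(A,B)` is a Jones pair: `A` invertible, `B` Schur invertible, and
`X_A Δ_B X_A = Δ_B X_A Δ_B` and `X_A Δ_{Bᵀ} X_A = Δ_{Bᵀ} X_A Δ_{Bᵀ}`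
as operators on matrices. -/
def IsJonesPair (A B : Matrix m m ℂ) : Prop :=
  IsUnit A ∧ (∀ i j, B i j ≠ 0) ∧
  (∀ M : Matrix m m ℂ, A * (B ⊙ (A * M)) = B ⊙ (A * (B ⊙ M))) ∧
  (∀ M : Matrix m m ℂ, A * (Bᵀ ⊙ (A * M)) = Bᵀ ⊙ (A * (Bᵀ ⊙ M)))

/-- An invertible Jones pair: a Jones pair in which moreover `A` is Schur
invertible and `B` is invertible. -/
def IsInvertibleJonesPair (A B : Matrix m m ℂ) : Prop :=
  IsJonesPair A B ∧ (∀ i j, A i j ≠ 0) ∧ IsUnit B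

/-- `W` is a spin model: for some `d` with `d² = n`, `(d⁻¹ W, W^(-))` is an
invertible Jones pair. -/
def IsSpinModel (W : Matrix m m ℂ) : Prop :=
  ∃ d : ℂ, d ^ 2 = (Fintype.card m : ℂ) ∧ IsInvertibleJonesPair (d⁻¹ • W) (sinv W)

/-- Given an invertible Jones pair `(A,B)` with `A` symmetric, `K` is paired with
`H ∈ N_{A,B}` if `Kᵀ ∈ N_{A,Bᵀ}` and `Θ_{A,B}(H) = (Θ_{A,Bᵀ}(Kᵀ))ᵀ`. -/
def Paired (A B H K : Matrix m m ℂ) : Prop :=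
  ∃ S : Matrix m m ℂ, IsTheta A B H S ∧ IsTheta A Bᵀ Kᵀ Sᵀ

/-- The `4n × 4n` matrix with `4 × 4` block structure
`[[P, Q, R, R], [Q, P, R, R], [S, S, T, U], [S, S, U, T]]`. -/
def blockMat {n : ℕ} (P Q R S T U : Matrix (Fin n) (Fin n) ℂ) :
    Matrix (Fin 4 × Fin n) (Fin 4 × Fin n) ℂ :=
  Matrix.of fun x y =>
    (![![P, Q, R, R], ![Q, P, R, R], ![S, S, T, U], ![S, S, U, T]] x.1 y.1) x.2 y.2

/-- Yamada's `4n × 4n` matrix `V` built from `A`, `B` and `d` with `d² = n`. -/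
noncomputable def Vmat {n : ℕ} (A B : Matrix (Fin n) (Fin n) ℂ) (d : ℂ) :
    Matrix (Fin 4 × Fin n) (Fin 4 × Fin n) ℂ :=
  blockMat (d • A) (-(d • A)) (sinv B) (sinv B)ᵀ (d • A) (-(d • A))

theorem exchange_key {n : ℕ} (A B C Q R S : Matrix (Fin n) (Fin n) ℂ) :
    (∀ M : Matrix (Fin n) (Fin n) ℂ, A * (B ⊙ (C * M)) = Q ⊙ (R * (S ⊙ M))) ↔
    ∀ i j k, ∑ l, A i l * (B l j * C l k) = Q i j * (R i k * S k j) := by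
  constructor
  · intro h i j k
    have h1 := congrFun (congrFun (h (Matrix.single k j 1)) i) j
    simpa [Matrix.mul_apply, Matrix.single_apply] using h1
  · intro h M
    ext i j
    simp only [Matrix.mul_apply, Matrix.hadamard_apply, Finset.mul_sum]
    rw [Finset.sum_comm]
    refine Finset.sum_congr rfl fun k _ => ?_
    have h1 := congrArg (· * M k j) (h i j k)
    simp only [Finset.sum_mul] at h1
    calc _ = ∑ l, A i l * (B l j * C l k) * M k j :=
          Finset.sum_congr rfl fun l _ => by ring
      _ = _ := h1
      _ = _ := by ring

/-- Exchange Lemma. -/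
theorem exchange_lemma {n : ℕ} (hn : 0 < n) (A B C Q R S : Matrix (Fin n) (Fin n) ℂ) :
    (∀ M : Matrix (Fin n) (Fin n) ℂ, A * (B ⊙ (C * M)) = Q ⊙ (R * (S ⊙ M))) ↔
    (∀ M : Matrix (Fin n) (Fin n) ℂ, A * (C ⊙ (B * M)) = R ⊙ (Q * (Sᵀ ⊙ M))) := by
  rw [exchange_key, exchange_key]
  constructor
  · intro h i j k
    rw [Matrix.transpose_apply, mul_left_comm, ← h i k j]
    exact Finset.sum_congr rfl fun l _ => by ring
  · intro h i j k
    have h1 := h i k j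
    rw [Matrix.transpose_apply] at h1
    rw [mul_left_comm, ← h1]
    exact Finset.sum_congr rfl fun l _ => by ring
end

section
/- Let A and B be n×n type-II matrices and let R, S be n×n complex matrices. Then the following are equivalent: (a) R·v_{ij} = S_{ij}·v_{ij} for all i,j, where v_{ij} = (Ae_i)∘(Be_j) (i.e. R ∈ N_{A,B} and S = Θ_{A,B}(R)); (b) R·(B∘(A·M)) = B∘(A·(S∘M)) for every n×n matrix M; (c) R·(A∘(B·M)) = A∘(B·(Sᵀ∘M)) for every n×n matrix M; (d) Bᵀ∘((B^(-))ᵀ·((nR)∘M)) = Sᵀ·((A^(-))ᵀ∘(Aᵀ·M)) for every n×n matrix M; (e) (A^(-))ᵀ∘(Aᵀ·((nRᵀ)∘M)) = S·(Bᵀ∘((B^(-))ᵀ·M)) for every n×n matrix M. -/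
open Matrix

variable {m : Type*} [Fintype m] [DecidableEq m]

/-- Entrywise form of condition (a). -/
def EntryA {n : ℕ} (A B R S : Matrix (Fin n) (Fin n) ℂ) : Prop :=
  ∀ i j k, ∑ l, R k l * (A l i * B l j) = S i j * (A k i * B k j)

/-- Entrywise form of condition (d). -/
def EntryD {n : ℕ} (A B R S : Matrix (Fin n) (Fin n) ℂ) : Prop :=
  ∀ j c k, B c j * ((B k j)⁻¹ * ((n : ℂ) * R k c)) = ∑ i, S i j * ((A c i)⁻¹ * A k i)

theorem isTheta_iff_entryA {n : ℕ} (A B R S : Matrix (Fin n) (Fin n) ℂ) :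
    IsTheta A B R S ↔ EntryA A B R S := by
  simp only [IsTheta, EntryA, funext_iff, Matrix.mulVec, dotProduct, colProd, Pi.smul_apply,
    smul_eq_mul]

theorem entryA_swap {n : ℕ} {A B R S : Matrix (Fin n) (Fin n) ℂ} (h : EntryA A B R S) :
    EntryA B A R Sᵀ := by
  intro i j k
  have := h j i k
  simp only [Matrix.transpose_apply, mul_comm (B _ i)]
  exact this

theorem entryA_iff_b {n : ℕ} (A B R S : Matrix (Fin n) (Fin n) ℂ) :
    EntryA A B R S ↔
      ∀ M : Matrix (Fin n) (Fin n) ℂ, R * (B ⊙ (A * M)) = B ⊙ (A * (S ⊙ M)) := by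
  constructor
  · intro h M
    ext k j
    simp only [Matrix.mul_apply, Matrix.hadamard_apply, Finset.mul_sum]
    rw [Finset.sum_comm]
    refine Finset.sum_congr rfl fun i _ => ?_
    have := congrArg (· * M i j) (h i j k)
    simp only [Finset.sum_mul] at this
    calc _ = _ := Finset.sum_congr rfl fun l _ => by ring
      _ = _ := this
      _ = _ := by ring
  · intro h i j k
    have := congrFun (congrFun (h (Matrix.single i j 1)) k) j
    simp only [Matrix.mul_apply, Matrix.hadamard_apply, Matrix.single_apply, and_true, mul_ite,
      mul_one, mul_zero, Finset.sum_ite_eq, Finset.mem_univ, if_true] at this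
    calc _ = _ := Finset.sum_congr rfl fun l _ => by ring
      _ = _ := this
      _ = _ := by ring

theorem entryD_iff_d {n : ℕ} (A B R S : Matrix (Fin n) (Fin n) ℂ) :
    EntryD A B R S ↔ ∀ M : Matrix (Fin n) (Fin n) ℂ,
        Bᵀ ⊙ ((sinv B)ᵀ * (((n : ℂ) • R) ⊙ M)) = Sᵀ * ((sinv A)ᵀ ⊙ (Aᵀ * M)) := by
  constructor
  · intro h M
    ext j c
    simp only [Matrix.mul_apply, Matrix.hadamard_apply, Finset.mul_sum, Matrix.transpose_apply,
      sinv, Matrix.of_apply, Matrix.smul_apply, smul_eq_mul]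
    rw [Finset.sum_comm]
    refine Finset.sum_congr rfl fun k _ => ?_
    have := congrArg (· * M k c) (h j c k)
    simp only [Finset.sum_mul] at this
    calc _ = _ := by ring
      _ = _ := this
      _ = _ := Finset.sum_congr rfl fun l _ => by ring
  · intro h j c k
    have := congrFun (congrFun (h (Matrix.single k c 1)) j) c
    simp only [Matrix.mul_apply, Matrix.hadamard_apply, Matrix.single_apply, and_true, mul_ite,
      mul_one, mul_zero, Finset.sum_ite_eq, Finset.mem_univ, if_true, Matrix.transpose_apply,
      sinv, Matrix.of_apply, Matrix.smul_apply, smul_eq_mul] at this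
    exact this

theorem entryD_iff_e {n : ℕ} (A B R S : Matrix (Fin n) (Fin n) ℂ) :
    EntryD B A R Sᵀ ↔ ∀ M : Matrix (Fin n) (Fin n) ℂ,
        (sinv A)ᵀ ⊙ (Aᵀ * (((n : ℂ) • Rᵀ) ⊙ M)) = S * (Bᵀ ⊙ ((sinv B)ᵀ * M)) := by
  constructor
  · intro h M
    ext j c
    simp only [Matrix.mul_apply, Matrix.hadamard_apply, Finset.mul_sum, Matrix.transpose_apply,
      sinv, Matrix.of_apply, Matrix.smul_apply, smul_eq_mul]
    rw [Finset.sum_comm]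
    refine Finset.sum_congr rfl fun k _ => ?_
    have := congrArg (· * M k c) (h j k c)
    simp only [Finset.sum_mul, Matrix.transpose_apply] at this
    calc _ = _ := by ring
      _ = _ := this
      _ = _ := Finset.sum_congr rfl fun l _ => by ring
  · intro h j c k
    have := congrFun (congrFun (h (Matrix.single c k 1)) j) k
    simp only [Matrix.mul_apply, Matrix.hadamard_apply, Matrix.single_apply, and_true, mul_ite,
      mul_one, mul_zero, Finset.sum_ite_eq, Finset.mem_univ, if_true, Matrix.transpose_apply,
      sinv, Matrix.of_apply, Matrix.smul_apply, smul_eq_mul] at this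
    calc _ = _ := by ring
      _ = _ := this
      _ = _ := Finset.sum_congr rfl fun l _ => by rw [Matrix.transpose_apply]; ring

theorem typeII_row {n : ℕ} {A : Matrix (Fin n) (Fin n) ℂ} (hA : IsTypeII A) (l c : Fin n) :
    ∑ i, A l i * (A c i)⁻¹ = if l = c then (n : ℂ) else 0 := by
  have := congrFun (congrFun hA.2 l) c
  simpa [Matrix.mul_apply, sinv, Matrix.one_apply] using this

theorem typeII_col {n : ℕ} (hn : 0 < n) {A : Matrix (Fin n) (Fin n) ℂ} (hA : IsTypeII A)
    (i j : Fin n) : ∑ c, (A c i)⁻¹ * A c j = if i = j then (n : ℂ) else 0 := by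
  have hn' : (n : ℂ) ≠ 0 := by exact_mod_cast hn.ne'
  have h1 : A * ((n : ℂ)⁻¹ • (sinv A)ᵀ) = 1 := by
    rw [Matrix.mul_smul, hA.2, Fintype.card_fin, smul_smul, inv_mul_cancel₀ hn', one_smul]
  have h2 := mul_eq_one_comm.mp h1
  have h3 : (sinv A)ᵀ * A = (n : ℂ) • (1 : Matrix (Fin n) (Fin n) ℂ) := by
    rw [← h2, Matrix.smul_mul, smul_smul, mul_inv_cancel₀ hn', one_smul]
  have := congrFun (congrFun h3 i) j
  simpa [Matrix.mul_apply, sinv, Matrix.one_apply] using this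

theorem entryA_iff_entryD {n : ℕ} (hn : 0 < n) {A B : Matrix (Fin n) (Fin n) ℂ}
    (R S : Matrix (Fin n) (Fin n) ℂ) (hA : IsTypeII A) (hB : IsTypeII B) :
    EntryA A B R S ↔ EntryD A B R S := by
  have hn' : (n : ℂ) ≠ 0 := by exact_mod_cast hn.ne'
  constructor
  · intro h j c k
    have hb := hB.1 k j
    symm
    calc ∑ i, S i j * ((A c i)⁻¹ * A k i)
        = ∑ i, (B k j)⁻¹ * (A c i)⁻¹ * (S i j * (A k i * B k j)) :=
          Finset.sum_congr rfl fun i _ => by field_simp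
      _ = ∑ i, ∑ l, (B k j)⁻¹ * R k l * B l j * (A l i * (A c i)⁻¹) := by
          refine Finset.sum_congr rfl fun i _ => ?_
          rw [← h i j k, Finset.mul_sum]
          exact Finset.sum_congr rfl fun l _ => by ring
      _ = ∑ l, (B k j)⁻¹ * R k l * B l j * (if l = c then (n : ℂ) else 0) := by
          rw [Finset.sum_comm]
          refine Finset.sum_congr rfl fun l _ => ?_
          rw [← Finset.mul_sum, typeII_row hA]
      _ = _ := by
          simp only [mul_ite, mul_zero, Finset.sum_ite_eq', Finset.mem_univ, if_true]
          ring
  · intro h i j k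
    have hb := hB.1 k j
    apply mul_left_cancel₀ hn'
    calc (n : ℂ) * ∑ l, R k l * (A l i * B l j)
        = ∑ l, B k j * A l i * (B l j * ((B k j)⁻¹ * ((n : ℂ) * R k l))) := by
          rw [Finset.mul_sum]
          exact Finset.sum_congr rfl fun l _ => by field_simp
      _ = ∑ l, ∑ a, B k j * S a j * A k a * ((A l a)⁻¹ * A l i) := by
          refine Finset.sum_congr rfl fun l _ => ?_
          rw [h j l k, Finset.mul_sum]
          exact Finset.sum_congr rfl fun a _ => by ring
      _ = ∑ a, B k j * S a j * A k a * (if a = i then (n : ℂ) else 0) := by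
          rw [Finset.sum_comm]
          refine Finset.sum_congr rfl fun a _ => ?_
          rw [← Finset.mul_sum, typeII_col hn hA]
      _ = _ := by
          simp only [mul_ite, mul_zero, Finset.sum_ite_eq', Finset.mem_univ, if_true]
          ring

theorem theta_equivalences {n : ℕ} (hn : 0 < n) (A B R S : Matrix (Fin n) (Fin n) ℂ)
    (hA : IsTypeII A) (hB : IsTypeII B) :
    List.TFAE [
      IsTheta A B R S,
      ∀ M : Matrix (Fin n) (Fin n) ℂ, R * (B ⊙ (A * M)) = B ⊙ (A * (S ⊙ M)),
      ∀ M : Matrix (Fin n) (Fin n) ℂ, R * (A ⊙ (B * M)) = A ⊙ (B * (Sᵀ ⊙ M)),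
      ∀ M : Matrix (Fin n) (Fin n) ℂ,
        Bᵀ ⊙ ((sinv B)ᵀ * (((n : ℂ) • R) ⊙ M)) = Sᵀ * ((sinv A)ᵀ ⊙ (Aᵀ * M)),
      ∀ M : Matrix (Fin n) (Fin n) ℂ,
        (sinv A)ᵀ ⊙ (Aᵀ * (((n : ℂ) • Rᵀ) ⊙ M)) = S * (Bᵀ ⊙ ((sinv B)ᵀ * M))
    ] := by
  have hs : EntryA A B R S ↔ EntryA B A R Sᵀ :=
    ⟨entryA_swap, fun h => by simpa using entryA_swap h⟩
  rw [isTheta_iff_entryA, ← entryA_iff_b A B, ← entryA_iff_b B A, ← entryD_iff_d,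
    ← entryD_iff_e, ← entryA_iff_entryD hn R S hA hB, ← entryA_iff_entryD hn R Sᵀ hB hA, ← hs]
  simp [List.tfae_cons_cons, List.tfae_singleton]
end

section
/- Let A and B be n×n type-II matrices, and let R, S be n×n complex matrices such that R·((Ae_i)∘(Be_j)) = S_{ij}·((Ae_i)∘(Be_j)) for all i,j. Then Rᵀ·((A^(-)e_i)∘(B^(-)e_j)) = S_{ij}·((A^(-)e_i)∘(B^(-)e_j)) for all i,j; that is, R ∈ N_{A,B} implies Rᵀ ∈ N_{A^(-),B^(-)} and Θ_{A^(-),B^(-)}(Rᵀ) = Θ_{A,B}(R). -/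
open Matrix

variable {m : Type*} [Fintype m] [DecidableEq m]

theorem theta_sinv {n : ℕ} (hn : 0 < n) (A B R S : Matrix (Fin n) (Fin n) ℂ)
    (hA : IsTypeII A) (hB : IsTypeII B) (h : IsTheta A B R S) :
    IsTheta (sinv A) (sinv B) Rᵀ S := by
  intro i j
  have hn0 : (n : ℂ) ≠ 0 := by exact_mod_cast hn.ne'
  set X : Matrix (Fin n) (Fin n) ℂ := Matrix.of fun k i => A k i * B k j with hX
  set Y : Matrix (Fin n) (Fin n) ℂ := Matrix.of fun i k => (A k i)⁻¹ * (B k j)⁻¹ with hY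
  have hXY : X * ((n : ℂ)⁻¹ • Y) = 1 := by
    ext k l
    have h1 := congrFun (congrFun hA.2 k) l
    simp only [Matrix.mul_apply, sinv, Matrix.transpose_apply, Matrix.of_apply,
      Matrix.smul_apply, Fintype.card_fin, smul_eq_mul] at h1
    have h2 : (X * ((n : ℂ)⁻¹ • Y)) k l
        = (n : ℂ)⁻¹ * (B k j * (B l j)⁻¹) * ∑ i, A k i * (A l i)⁻¹ := by
      simp only [Matrix.mul_apply, hX, hY, Matrix.of_apply, Matrix.smul_apply, smul_eq_mul,
        Finset.mul_sum]
      exact Finset.sum_congr rfl fun _ _ => by ring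
    rw [h2, h1]
    by_cases hkl : k = l
    · subst hkl
      have := hB.1 k j
      simp only [Matrix.one_apply_eq]
      field_simp
    · simp [Matrix.one_apply_ne hkl]
  have hYX := _root_.mul_eq_one_comm.mp hXY
  have hR : R * X = X * Matrix.diagonal (fun i => S i j) := by
    ext k i
    have h1 := congrFun (h i j) k
    simp only [Matrix.mulVec, dotProduct, colProd, Pi.smul_apply, smul_eq_mul] at h1
    rw [Matrix.mul_diagonal]
    simp only [Matrix.mul_apply, hX, Matrix.of_apply]
    rw [h1]; ring
  have hN : ((n : ℂ)⁻¹ • Y) * R = Matrix.diagonal (fun i => S i j) * ((n : ℂ)⁻¹ • Y) := by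
    generalize ((n : ℂ)⁻¹ • Y) = N at *
    calc N * R = N * (R * X) * N := by
          rw [Matrix.mul_assoc, Matrix.mul_assoc R, hXY, Matrix.mul_one]
      _ = _ := by rw [hR, ← Matrix.mul_assoc N, hYX, Matrix.one_mul]
  have hYR : Y * R = Matrix.diagonal (fun i => S i j) * Y := by
    rw [Matrix.smul_mul, Matrix.mul_smul] at hN
    exact smul_right_injective _ (inv_ne_zero hn0) hN
  ext l
  have h1 := congrFun (congrFun hYR i) l
  rw [Matrix.diagonal_mul] at h1
  simp only [Matrix.mul_apply, hY, Matrix.of_apply] at h1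
  simp only [Matrix.mulVec, dotProduct, colProd, Pi.smul_apply, smul_eq_mul, sinv,
    Matrix.transpose_apply, Matrix.of_apply]
  rw [← h1]
  exact Finset.sum_congr rfl fun _ _ => by ring
end

section
/- Let A be an n×n type-II matrix. If R ∈ N_A with S = Θ_A(R), then S ∈ N_{Aᵀ} and Θ_{Aᵀ}(S) = nRᵀ, i.e. Θ_{Aᵀ}(Θ_A(R)) = nRᵀ. Consequently the image of Θ_A equals N_{Aᵀ} and the image of Θ_{Aᵀ} equals N_A (so the dual algebras satisfy N_A' = N_{Aᵀ} and N_{Aᵀ}' = N_A). -/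
open Matrix

variable {m : Type*} [Fintype m] [DecidableEq m]

theorem typeII_transpose {n : ℕ} (hn : 0 < n) {A : Matrix (Fin n) (Fin n) ℂ}
    (hA : IsTypeII A) : IsTypeII Aᵀ := by
  refine ⟨fun i j => hA.1 j i, ?_⟩
  have hn' : (n : ℂ) ≠ 0 := by exact_mod_cast hn.ne'
  have h2 := hA.2
  rw [Fintype.card_fin] at h2 ⊢
  have h3 : A * ((n : ℂ)⁻¹ • (sinv A)ᵀ) = 1 := by
    rw [Matrix.mul_smul, h2, smul_smul, inv_mul_cancel₀ hn', one_smul]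
  have h4 := mul_eq_one_comm.mp h3
  have h5 : (sinv A)ᵀ * A = (n : ℂ) • (1 : Matrix (Fin n) (Fin n) ℂ) := by
    rw [← h4, Matrix.smul_mul, smul_smul, mul_inv_cancel₀ hn', one_smul]
  have h6 := congrArg Matrix.transpose h5
  rw [Matrix.transpose_mul, Matrix.transpose_smul, Matrix.transpose_one] at h6
  exact h6

theorem theta_iff {n : ℕ} (A R S : Matrix (Fin n) (Fin n) ℂ) :
    IsTheta A (sinv A) R S ↔
      ∀ i j l, ∑ k, R l k * (A k i * (A k j)⁻¹) = S i j * (A l i * (A l j)⁻¹) := by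
  unfold IsTheta
  refine forall_congr' fun i => forall_congr' fun j => ?_
  rw [funext_iff]
  rfl

theorem theta_smul {n : ℕ} {A R S : Matrix (Fin n) (Fin n) ℂ} (c : ℂ)
    (h : IsTheta A (sinv A) R S) : IsTheta A (sinv A) (c • R) (c • S) := by
  intro i j
  rw [Matrix.smul_mulVec, h i j, Matrix.smul_apply, smul_smul, smul_eq_mul]

theorem theta_dual {n : ℕ} {A R S : Matrix (Fin n) (Fin n) ℂ} (hA : IsTypeII A)
    (h : IsTheta A (sinv A) R S) : IsTheta Aᵀ (sinv Aᵀ) S ((n : ℂ) • Rᵀ) := by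
  rw [theta_iff] at h ⊢
  intro p q i
  have ho : ∀ k, ∑ j, A p j * (A k j)⁻¹ = if p = k then (n : ℂ) else 0 := by
    intro k
    have h2 := congrFun (congrFun hA.2 p) k
    rw [Fintype.card_fin, Matrix.smul_apply, Matrix.one_apply, smul_eq_mul, mul_ite, mul_one,
      mul_zero] at h2
    exact h2
  have hS : ∀ j, S i j * (A p j * (A q j)⁻¹)
      = ∑ k, (A q i)⁻¹ * R q k * A k i * (A p j * (A k j)⁻¹) := by
    intro j
    have hq := hA.1 q i
    have : S i j * (A p j * (A q j)⁻¹)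
        = (A q i)⁻¹ * A p j * (S i j * (A q i * (A q j)⁻¹)) := by
      have := mul_inv_cancel₀ hq
      linear_combination (-(S i j * A p j * (A q j)⁻¹)) * this
    rw [this, ← h i j q, Finset.mul_sum]
    exact Finset.sum_congr rfl fun k _ => by ring
  simp only [Matrix.transpose_apply, Matrix.smul_apply, smul_eq_mul]
  rw [Finset.sum_congr rfl fun j _ => hS j, Finset.sum_comm]
  simp_rw [← Finset.mul_sum, ho]
  simp only [mul_ite, mul_zero, Finset.sum_ite_eq, Finset.mem_univ, if_true]
  ring

theorem theta_inNomura {n : ℕ} {A R S : Matrix (Fin n) (Fin n) ℂ}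
    (h : IsTheta A (sinv A) R S) : InNomura A (sinv A) R := fun i j => ⟨S i j, h i j⟩

theorem theta_image {n : ℕ} (hn : 0 < n) {A : Matrix (Fin n) (Fin n) ℂ} (hA : IsTypeII A) :
    {S : Matrix (Fin n) (Fin n) ℂ | ∃ R, IsTheta A (sinv A) R S} =
      {S : Matrix (Fin n) (Fin n) ℂ | InNomura Aᵀ (sinv Aᵀ) S} := by
  have hn' : (n : ℂ) ≠ 0 := by exact_mod_cast hn.ne'
  have hT := typeII_transpose hn hA
  ext S
  constructor
  · rintro ⟨R, h⟩
    exact theta_inNomura (theta_dual hA h)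
  · intro h
    choose T hT0 using h
    have h1 : IsTheta Aᵀ (sinv Aᵀ) S (Matrix.of T) := hT0
    have h2 := theta_dual hA (theta_dual hT h1)
    have h3 := theta_smul ((n : ℂ)⁻¹) h2
    rw [smul_smul, smul_smul, inv_mul_cancel₀ hn', one_smul, one_smul] at h3
    have h4 := theta_smul ((n : ℂ)⁻¹) (theta_dual hT h3)
    rw [smul_smul, inv_mul_cancel₀ hn', one_smul] at h4
    exact ⟨_, h4⟩

theorem duality_typeII {n : ℕ} (hn : 0 < n) (A : Matrix (Fin n) (Fin n) ℂ)
    (hA : IsTypeII A) :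
    (∀ R S : Matrix (Fin n) (Fin n) ℂ, IsTheta A (sinv A) R S →
      InNomura Aᵀ (sinv Aᵀ) S ∧ IsTheta Aᵀ (sinv Aᵀ) S ((n : ℂ) • Rᵀ)) ∧
    {S : Matrix (Fin n) (Fin n) ℂ | ∃ R, IsTheta A (sinv A) R S} =
      {S : Matrix (Fin n) (Fin n) ℂ | InNomura Aᵀ (sinv Aᵀ) S} ∧
    {S : Matrix (Fin n) (Fin n) ℂ | ∃ R, IsTheta Aᵀ (sinv Aᵀ) R S} =
      {S : Matrix (Fin n) (Fin n) ℂ | InNomura A (sinv A) S} := by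
  exact ⟨fun R S h => ⟨theta_inNomura (theta_dual hA h), theta_dual hA h⟩, theta_image hn hA,
    theta_image hn (typeII_transpose hn hA)⟩
end

section
/- Let A be an n×n type-II matrix and let M, N ∈ N_A. Then: (i) MN ∈ N_A and Θ_A(MN) = Θ_A(M)∘Θ_A(N); (ii) M∘N ∈ N_A and Θ_A(M∘N) = n^{-1}·Θ_A(M)·Θ_A(N); (iii) Mᵀ ∈ N_A and Θ_A(Mᵀ) = Θ_A(M)ᵀ; (iv) M ∈ N_{A^(-)} and Θ_{A^(-)}(M) = Θ_A(M)ᵀ. -/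
open Matrix

variable {m : Type*} [Fintype m] [DecidableEq m]

lemma theta_entry {n : ℕ} {A M S : Matrix (Fin n) (Fin n) ℂ} (h : IsTheta A (sinv A) M S)
    (i j u : Fin n) :
    ∑ k, M u k * (A k i * (A k j)⁻¹) = S i j * (A u i * (A u j)⁻¹) := by
  have := congrFun (h i j) u
  simpa [Matrix.mulVec, dotProduct, colProd, sinv] using this

lemma theta_of_entry {n : ℕ} {A M S : Matrix (Fin n) (Fin n) ℂ}
    (h : ∀ i j u, ∑ k, M u k * (A k i * (A k j)⁻¹) = S i j * (A u i * (A u j)⁻¹)) :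
    IsTheta A (sinv A) M S := by
  intro i j
  funext u
  simpa [Matrix.mulVec, dotProduct, colProd, sinv] using h i j u

lemma orth_row {n : ℕ} {A : Matrix (Fin n) (Fin n) ℂ} (hA : IsTypeII A) (u k : Fin n) :
    ∑ r, A u r * (A k r)⁻¹ = if u = k then (n : ℂ) else 0 := by
  have := congrFun (congrFun hA.2 u) k
  simpa [Matrix.mul_apply, sinv, Matrix.one_apply] using this

lemma orth_col {n : ℕ} (hn : 0 < n) {A : Matrix (Fin n) (Fin n) ℂ} (hA : IsTypeII A)
    (i j : Fin n) :
    ∑ u, A u i * (A u j)⁻¹ = if i = j then (n : ℂ) else 0 := by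
  have hn' : (n : ℂ) ≠ 0 := by exact_mod_cast hn.ne'
  have h1 : A * ((n : ℂ)⁻¹ • (sinv A)ᵀ) = 1 := by
    rw [Matrix.mul_smul, hA.2, smul_smul]
    simp [hn']
  have h2 := _root_.mul_eq_one_comm.mp h1
  have h3 := congrFun (congrFun h2 j) i
  simp only [Matrix.smul_apply, Matrix.mul_apply, Matrix.transpose_apply, sinv,
    Matrix.of_apply, smul_eq_mul, Matrix.one_apply] at h3
  simp only [mul_assoc] at h3
  rw [← Finset.mul_sum, inv_mul_eq_iff_eq_mul₀ hn'] at h3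
  rw [Finset.sum_congr rfl (fun u _ => mul_comm (A u i) _), h3]
  simp [eq_comm]

lemma theta_recover {n : ℕ} {A M S : Matrix (Fin n) (Fin n) ℂ} (hA : IsTypeII A)
    (h : IsTheta A (sinv A) M S) (i u k : Fin n) :
    ∑ r, S i r * (A u i * (A u r)⁻¹) * (A k r * (A k i)⁻¹) = n * M u k := by
  have hk := hA.1 k i
  calc _ = ∑ r, ∑ l, M u l * (A l i * (A k i)⁻¹) * (A k r * (A l r)⁻¹) := by
        refine Finset.sum_congr rfl fun r _ => ?_
        rw [← theta_entry h i r u, Finset.sum_mul]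
        exact Finset.sum_congr rfl fun l _ => by ring
    _ = ∑ l, M u l * (A l i * (A k i)⁻¹) * (if k = l then (n : ℂ) else 0) := by
        rw [Finset.sum_comm]
        refine Finset.sum_congr rfl fun l _ => ?_
        rw [← Finset.mul_sum, orth_row hA]
    _ = _ := by
        simp [hk, mul_comm]

theorem theta_properties {n : ℕ} (hn : 0 < n) (A M N SM SN : Matrix (Fin n) (Fin n) ℂ)
    (hA : IsTypeII A)
    (hM : IsTheta A (sinv A) M SM) (hN : IsTheta A (sinv A) N SN) :
    IsTheta A (sinv A) (M * N) (SM ⊙ SN) ∧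
    IsTheta A (sinv A) (M ⊙ N) ((n : ℂ)⁻¹ • (SM * SN)) ∧
    IsTheta A (sinv A) Mᵀ SMᵀ ∧
    IsTheta (sinv A) (sinv (sinv A)) M SMᵀ := by
  have hn' : (n : ℂ) ≠ 0 := by exact_mod_cast hn.ne'
  refine ⟨?_, ?_, ?_, ?_⟩
  · intro i j
    rw [← Matrix.mulVec_mulVec, hN i j, Matrix.mulVec_smul, hM i j, smul_smul,
      Matrix.hadamard_apply, mul_comm]
  · apply theta_of_entry
    intro i j u
    apply mul_left_cancel₀ hn'
    calc _ = ∑ k, ∑ r, SM i r * (A u i * (A u r)⁻¹) * (A k r * (A k i)⁻¹) *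
              (N u k * (A k i * (A k j)⁻¹)) := by
          rw [Finset.mul_sum]
          refine Finset.sum_congr rfl fun k _ => ?_
          rw [← Finset.sum_mul, theta_recover hA hM, Matrix.hadamard_apply]
          ring
      _ = ∑ r, ∑ k, SM i r * (A u i * (A u r)⁻¹) * (N u k * (A k r * (A k j)⁻¹)) := by
          rw [Finset.sum_comm]
          refine Finset.sum_congr rfl fun r _ => Finset.sum_congr rfl fun k _ => ?_
          have := hA.1 k i
          field_simp
      _ = ∑ r, SM i r * SN r j * (A u i * (A u j)⁻¹) := by
          refine Finset.sum_congr rfl fun r _ => ?_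
          rw [← Finset.mul_sum, theta_entry hN]
          have := hA.1 u r
          field_simp
      _ = _ := by
          rw [← Finset.sum_mul, Matrix.smul_apply, Matrix.mul_apply, smul_eq_mul]
          field_simp
  · apply theta_of_entry
    intro i j k
    apply mul_left_cancel₀ hn'
    calc _ = ∑ u, ∑ r, SM j r * (A u j * (A u r)⁻¹) * (A k r * (A k j)⁻¹) *
              (A u i * (A u j)⁻¹) := by
          rw [Finset.mul_sum]
          refine Finset.sum_congr rfl fun u _ => ?_
          rw [← Finset.sum_mul, theta_recover hA hM, Matrix.transpose_apply]
          ring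
      _ = ∑ r, ∑ u, SM j r * (A k r * (A k j)⁻¹) * (A u i * (A u r)⁻¹) := by
          rw [Finset.sum_comm]
          refine Finset.sum_congr rfl fun r _ => Finset.sum_congr rfl fun u _ => ?_
          have := hA.1 u j
          field_simp
      _ = ∑ r, SM j r * (A k r * (A k j)⁻¹) * (if i = r then (n : ℂ) else 0) := by
          refine Finset.sum_congr rfl fun r _ => ?_
          rw [← Finset.mul_sum, orth_col hn hA]
      _ = _ := by
          simp [mul_comm]
  · intro i j
    have : colProd (sinv A) (sinv (sinv A)) i j = colProd A (sinv A) j i := by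
      funext k
      simp [colProd, sinv, mul_comm]
    rw [this, hM j i, Matrix.transpose_apply]
end

section
/- Let W be an n×n type-II matrix. Then W ∈ N_W if and only if there exists a nonzero complex scalar c such that cW is a spin model. Moreover, if W ∈ N_W, then N_W = N_{Wᵀ} and Θ_W(M) = Θ_{Wᵀ}(M) for every M ∈ N_W (so N_W is a formally self-dual Bose-Mesner algebra with duality map Θ_W = Θ_{Wᵀ}). -/
open Matrix

variable {m : Type*} [Fintype m] [DecidableEq m]

theorem aux_row {n : ℕ} {W : Matrix (Fin n) (Fin n) ℂ} (hW : IsTypeII W) (i j : Fin n) :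
    ∑ k, W i k * (W j k)⁻¹ = if i = j then (n : ℂ) else 0 := by
  have h := congrFun (congrFun hW.2 i) j
  simpa [Matrix.mul_apply, sinv, Matrix.one_apply] using h

theorem aux_comm {n : ℕ} (hn : 0 < n) {W : Matrix (Fin n) (Fin n) ℂ} (hW : IsTypeII W) :
    (sinv W)ᵀ * W = (n : ℂ) • (1 : Matrix (Fin n) (Fin n) ℂ) := by
  have hn' : (n : ℂ) ≠ 0 := by exact_mod_cast hn.ne'
  have h1 : W * ((n : ℂ)⁻¹ • (sinv W)ᵀ) = 1 := by
    rw [Matrix.mul_smul, hW.2, smul_smul]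
    simp [hn']
  have h2 := mul_eq_one_comm.mp h1
  rw [← h2, Matrix.smul_mul, smul_smul, mul_inv_cancel₀ hn', one_smul]

theorem aux_col {n : ℕ} (hn : 0 < n) {W : Matrix (Fin n) (Fin n) ℂ} (hW : IsTypeII W)
    (i j : Fin n) :
    ∑ k, W k i * (W k j)⁻¹ = if i = j then (n : ℂ) else 0 := by
  have h := congrFun (congrFun (aux_comm hn hW) j) i
  simp only [Matrix.mul_apply, sinv, Matrix.transpose_apply, Matrix.of_apply,
    Matrix.smul_apply, Matrix.one_apply, smul_eq_mul, mul_ite, mul_one, mul_zero] at h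
  simp only [eq_comm (a := i)]
  simpa [mul_comm] using h

theorem aux_inv1 {n : ℕ} {W : Matrix (Fin n) (Fin n) ℂ} (hW : IsTypeII W)
    (x y : Fin n → ℂ) (h : ∀ a, ∑ k, x k * W k a = y a) (m : Fin n) :
    n * x m = ∑ a, y a * (W m a)⁻¹ := by
  simp only [← h, Finset.sum_mul]
  rw [Finset.sum_comm]
  simp only [mul_assoc, ← Finset.mul_sum, aux_row hW]
  simp [mul_comm]

theorem aux_inv2 {n : ℕ} (hn : 0 < n) {W : Matrix (Fin n) (Fin n) ℂ} (hW : IsTypeII W)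
    (x y : Fin n → ℂ) (h : ∀ k, ∑ a, x a * W k a = y k) (m : Fin n) :
    n * x m = ∑ k, y k * (W k m)⁻¹ := by
  simp only [← h, Finset.sum_mul]
  rw [Finset.sum_comm]
  simp only [mul_assoc, ← Finset.mul_sum, aux_col hn hW]
  simp [mul_comm]

theorem aux_theta {n : ℕ} {W M S : Matrix (Fin n) (Fin n) ℂ} :
    IsTheta W (sinv W) M S ↔
      ∀ i j l, ∑ k, M l k * (W k i * (W k j)⁻¹) = S i j * (W l i * (W l j)⁻¹) := by
  unfold IsTheta
  simp only [funext_iff, Matrix.mulVec, dotProduct, colProd, sinv, Matrix.of_apply,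
    Pi.smul_apply, smul_eq_mul]

theorem aux_nomura {n : ℕ} {A B M : Matrix (Fin n) (Fin n) ℂ} :
    InNomura A B M ↔ ∃ S, IsTheta A B M S := by
  constructor
  · intro h
    choose S hS using h
    exact ⟨Matrix.of S, hS⟩
  · rintro ⟨S, hS⟩ i j
    exact ⟨S i j, hS i j⟩

/-- The transposed eigenvector equation. -/
theorem aux_left {n : ℕ} (hn : 0 < n) {W S : Matrix (Fin n) (Fin n) ℂ} (hW : IsTypeII W)
    (hS : ∀ i j l, ∑ k, W l k * (W k i * (W k j)⁻¹) = S i j * (W l i * (W l j)⁻¹))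
    (i j k : Fin n) :
    ∑ l, W l k * (W l j * (W l i)⁻¹) = S i j * (W k j * (W k i)⁻¹) := by
  have hn' : (n : ℂ) ≠ 0 := by exact_mod_cast hn.ne'
  have key := aux_inv1 hW
    (fun k => (∑ l, W l k * (W l j * (W l i)⁻¹)) * (W k j)⁻¹)
    (fun a => S a j * if a = i then (n : ℂ) else 0) (by
      intro a
      rw [← aux_col hn hW a i, Finset.mul_sum]
      simp only [Finset.sum_mul]
      rw [Finset.sum_comm]
      refine Finset.sum_congr rfl fun l _ => ?_
      have h1 : ∑ x, W l x * (W l j * (W l i)⁻¹) * (W x j)⁻¹ * W x a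
          = (W l j * (W l i)⁻¹) * ∑ x, W l x * (W x a * (W x j)⁻¹) := by
        rw [Finset.mul_sum]
        exact Finset.sum_congr rfl fun x _ => by ring
      rw [h1, hS]
      have := hW.1 l j
      field_simp) k
  simp only [mul_ite, mul_zero, ite_mul, zero_mul, Finset.sum_ite_eq', Finset.mem_univ,
    if_true] at key
  have h1 := hW.1 k j
  have h2 := hW.1 k i
  generalize (∑ l, W l k * (W l j * (W l i)⁻¹)) = Q at key ⊢
  field_simp at key ⊢
  linear_combination key

theorem aux_main {n : ℕ} (hn : 0 < n) {W S : Matrix (Fin n) (Fin n) ℂ} (hW : IsTypeII W)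
    (hS : ∀ i j l, ∑ k, W l k * (W k i * (W k j)⁻¹) = S i j * (W l i * (W l j)⁻¹)) :
    ∃ g : ℂ, g ≠ 0 ∧ ∀ i j, S i j = g * (W i j)⁻¹ := by
  have hn' : (n : ℂ) ≠ 0 := by exact_mod_cast hn.ne'
  have o : Fin n := ⟨0, hn⟩
  have hrow : ∀ l, ∑ k, W l k = S o o := by
    intro l
    have h := hS o o l
    simpa [hW.1] using h
  have hdiag : ∀ l, W l l = W o o := by
    have h : ∀ l, (n : ℂ) * W l l = ∑ i, S i o := by
      intro l
      have h := aux_inv1 hW (fun k => W l k * (W k o)⁻¹)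
        (fun i => S i o * (W l i * (W l o)⁻¹)) (by
          intro a
          rw [← hS]
          exact Finset.sum_congr rfl fun x _ => by ring) l
      have h1 : ∑ i, S i o * (W l i * (W l o)⁻¹) * (W l i)⁻¹ = (∑ i, S i o) * (W l o)⁻¹ := by
        rw [Finset.sum_mul]
        refine Finset.sum_congr rfl fun x _ => ?_
        have := hW.1 l x
        field_simp
      rw [h1, ← mul_assoc] at h
      exact mul_right_cancel₀ (inv_ne_zero (hW.1 l o)) h
    intro l
    exact mul_left_cancel₀ hn' ((h l).trans (h o).symm)
  have hs : S o o ≠ 0 := by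
    intro h0
    have h := aux_inv2 hn hW (fun _ => 1) (fun _ => 0) (by
      intro k; simp [hrow, h0]) o
    simp [hn'] at h
  refine ⟨S o o * W o o, mul_ne_zero hs (hW.1 _ _), ?_⟩
  intro i j
  have key := aux_inv2 hn hW (fun a => S i a)
    (fun k => if k = i then S o o * W o o * n else 0) (by
      intro k
      have h1 : ∑ a, S i a * W k a = W k i * ∑ a, ∑ l, W l k * (W l a * (W l i)⁻¹) := by
        simp only [aux_left hn hW hS]
        rw [Finset.mul_sum]
        refine Finset.sum_congr rfl fun a _ => ?_
        have := hW.1 k i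
        field_simp
      have h2 : ∑ a, ∑ l, W l k * (W l a * (W l i)⁻¹) = S o o * ∑ l, W l k * (W l i)⁻¹ := by
        rw [Finset.sum_comm, Finset.mul_sum]
        refine Finset.sum_congr rfl fun l _ => ?_
        rw [← hrow l, Finset.sum_mul]
        exact Finset.sum_congr rfl fun a _ => by ring
      rw [h1, h2, aux_col hn hW]
      split_ifs with hk
      · subst hk
        rw [hdiag k]; ring
      · simp) j
  simp only [ite_mul, zero_mul, Finset.sum_ite_eq', Finset.mem_univ, if_true] at key
  apply mul_left_cancel₀ hn'
  rw [key]; ring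


theorem aux_triple {n : ℕ} (hn : 0 < n) {W S : Matrix (Fin n) (Fin n) ℂ} (hW : IsTypeII W)
    (hS : ∀ i j l, ∑ k, W l k * (W k i * (W k j)⁻¹) = S i j * (W l i * (W l j)⁻¹))
    (i j k : Fin n) : W k j * W j i * W i k = W j k * W k i * W i j := by
  obtain ⟨g, hg, hgS⟩ := aux_main hn hW hS
  have h1 := aux_left hn hW hS i j k
  have h2 := aux_left hn hW hS i k j
  have h3 : ∑ l, W l k * (W l j * (W l i)⁻¹) = ∑ l, W l j * (W l k * (W l i)⁻¹) :=
    Finset.sum_congr rfl fun l _ => by ring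
  rw [h1, h2, hgS, hgS] at h3
  have a1 := hW.1 i j
  have a2 := hW.1 k i
  have a3 := hW.1 i k
  have a4 := hW.1 j i
  field_simp at h3
  linear_combination h3

theorem aux_ratio {n : ℕ} (hn : 0 < n) {W S : Matrix (Fin n) (Fin n) ℂ} (hW : IsTypeII W)
    (hS : ∀ i j l, ∑ k, W l k * (W k i * (W k j)⁻¹) = S i j * (W l i * (W l j)⁻¹))
    (i j k : Fin n) :
    W i k * (W j k)⁻¹ = (W i j * (W j i)⁻¹) * (W k i * (W k j)⁻¹) := by
  have h := aux_triple hn hW hS i j k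
  have a1 := hW.1 j k
  have a2 := hW.1 k j
  have a4 := hW.1 j i
  field_simp
  linear_combination h

theorem aux_thetaT {n : ℕ} (hn : 0 < n) {W S M T : Matrix (Fin n) (Fin n) ℂ} (hW : IsTypeII W)
    (hS : ∀ i j l, ∑ k, W l k * (W k i * (W k j)⁻¹) = S i j * (W l i * (W l j)⁻¹)) :
    IsTheta W (sinv W) M T ↔ IsTheta Wᵀ (sinv Wᵀ) M T := by
  rw [aux_theta, aux_theta]
  refine forall_congr' fun i => forall_congr' fun j => forall_congr' fun l => ?_
  simp only [Matrix.transpose_apply, aux_ratio hn hW hS i j]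
  have a : W i j * (W j i)⁻¹ ≠ 0 := mul_ne_zero (hW.1 _ _) (inv_ne_zero (hW.1 _ _))
  have h1 : ∑ k, M l k * (W i j * (W j i)⁻¹ * (W k i * (W k j)⁻¹))
      = (W i j * (W j i)⁻¹) * ∑ k, M l k * (W k i * (W k j)⁻¹) := by
    rw [Finset.mul_sum]
    exact Finset.sum_congr rfl fun x _ => by ring
  rw [h1, mul_left_comm (T i j) (W i j * (W j i)⁻¹), mul_right_inj' a]

theorem aux_jones {n : ℕ} (A B : Matrix (Fin n) (Fin n) ℂ) :
    (∀ M : Matrix (Fin n) (Fin n) ℂ, A * (B ⊙ (A * M)) = B ⊙ (A * (B ⊙ M))) ↔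
      ∀ i j l, ∑ k, A l k * (B k j * A k i) = B l j * (A l i * B i j) := by
  constructor
  · intro h i j l
    have h1 := congrFun (congrFun (h (Matrix.single i j 1)) l) j
    simpa [Matrix.mul_apply, Matrix.hadamard_apply, Matrix.single_apply] using h1
  · intro h M
    ext l j
    simp only [Matrix.mul_apply, Matrix.hadamard_apply, Finset.mul_sum]
    rw [Finset.sum_comm]
    refine Finset.sum_congr rfl fun i _ => ?_
    have h1 := congrArg (· * M i j) (h i j l)
    simp only [Finset.sum_mul] at h1
    calc _ = _ := Finset.sum_congr rfl fun x _ => by ring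
      _ = _ := h1
      _ = _ := by ring

theorem aux_isUnit {n : ℕ} (hn : 0 < n) {W : Matrix (Fin n) (Fin n) ℂ} (hW : IsTypeII W) :
    IsUnit W ∧ IsUnit (sinv W) := by
  have hn' : (n : ℂ) ≠ 0 := by exact_mod_cast hn.ne'
  have h1 : W * ((n : ℂ)⁻¹ • (sinv W)ᵀ) = 1 := by
    rw [Matrix.mul_smul, hW.2, smul_smul]
    simp [hn']
  have h2 : (sinv W) * ((n : ℂ)⁻¹ • Wᵀ) = 1 := by
    have h3 := congrArg Matrix.transpose h1
    rw [Matrix.transpose_mul, Matrix.transpose_smul, Matrix.transpose_transpose,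
      Matrix.transpose_one] at h3
    rw [← h3, Matrix.smul_mul, Matrix.mul_smul]
  exact ⟨IsUnit.of_mul_eq_one _ h1, IsUnit.of_mul_eq_one _ h2⟩

theorem aux_unit_smul {n : ℕ} {A : Matrix (Fin n) (Fin n) ℂ} (h : IsUnit A) {c : ℂ}
    (hc : c ≠ 0) : IsUnit (c • A) :=
  h.smul (Units.mk0 c hc)

theorem spin_model_characterization {n : ℕ} (hn : 0 < n) (W : Matrix (Fin n) (Fin n) ℂ)
    (hW : IsTypeII W) :
    (InNomura W (sinv W) W ↔ ∃ c : ℂ, c ≠ 0 ∧ IsSpinModel (c • W)) ∧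
    (InNomura W (sinv W) W →
      {M : Matrix (Fin n) (Fin n) ℂ | InNomura W (sinv W) M} =
        {M : Matrix (Fin n) (Fin n) ℂ | InNomura Wᵀ (sinv Wᵀ) M} ∧
      ∀ M S : Matrix (Fin n) (Fin n) ℂ,
        IsTheta W (sinv W) M S → IsTheta Wᵀ (sinv Wᵀ) M S) := by
  refine ⟨⟨?_, ?_⟩, ?_⟩
  · intro h
    obtain ⟨S, hS⟩ := aux_nomura.mp h
    rw [aux_theta] at hS
    obtain ⟨g, hg, hgS⟩ := aux_main hn hW hS
    have hn' : (n : ℂ) ≠ 0 := by exact_mod_cast hn.ne'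
    obtain ⟨d, hd⟩ := IsAlgClosed.exists_pow_nat_eq (n : ℂ) (n := 2) (by norm_num)
    have hd0 : d ≠ 0 := by
      rintro rfl
      exact hn' (by simpa using hd.symm)
    obtain ⟨c, hc⟩ := IsAlgClosed.exists_pow_nat_eq (d * g⁻¹) (n := 2) (by norm_num)
    have hc0 : c ≠ 0 := by
      rintro rfl
      simp [hd0, hg] at hc
    have hcg : d = c ^ 2 * g := by rw [hc]; field_simp
    have hU := aux_isUnit hn hW
    have hsc : sinv (c • W) = c⁻¹ • sinv W := by
      ext i j
      simp [sinv, mul_comm]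
    refine ⟨c, hc0, d, by simpa using hd, ⟨?_, ?_, ?_, ?_⟩, ?_, ?_⟩
    · exact aux_unit_smul (aux_unit_smul hU.1 hc0) (inv_ne_zero hd0)
    · intro i j
      simp [sinv, hc0, hW.1 i j]
    · rw [aux_jones]
      intro i j l
      have h1 := hS i j l
      simp only [Matrix.smul_apply, sinv, Matrix.of_apply, smul_eq_mul]
      have h2 : ∑ k, d⁻¹ * (c * W l k) * ((c * W k j)⁻¹ * (d⁻¹ * (c * W k i)))
          = (d⁻¹ * d⁻¹ * c) * ∑ k, W l k * (W k i * (W k j)⁻¹) := by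
        rw [Finset.mul_sum]
        refine Finset.sum_congr rfl fun k _ => ?_
        have := hW.1 k j
        field_simp
      rw [h2, h1, hgS]
      have := hW.1 l j
      have := hW.1 i j
      field_simp
      linear_combination (-W l i) * hcg
    · rw [aux_jones]
      intro i j l
      simp only [Matrix.smul_apply, sinv, Matrix.of_apply, smul_eq_mul, Matrix.transpose_apply]
      have h2 : ∑ k, d⁻¹ * (c * W l k) * ((c * W j k)⁻¹ * (d⁻¹ * (c * W k i)))
          = (d⁻¹ * d⁻¹ * c * (W l j * (W j l)⁻¹)) * ∑ k, W k l * (W k i * (W k j)⁻¹) := by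
        rw [Finset.mul_sum]
        refine Finset.sum_congr rfl fun k _ => ?_
        have h3 := aux_ratio hn hW hS l j k
        calc _ = d⁻¹ * d⁻¹ * c * (c * c⁻¹) * W k i * (W l k * (W j k)⁻¹) := by
              rw [mul_inv]; ring
          _ = _ := by rw [h3, mul_inv_cancel₀ hc0]; ring
      rw [h2, aux_left hn hW hS, hgS]
      have := hW.1 l j
      have := hW.1 j l
      have := hW.1 j i
      field_simp
      linear_combination (-W l i) * hcg
    · intro i j
      simp [hc0, hd0, hW.1 i j]
    · rw [hsc]
      exact aux_unit_smul hU.2 (inv_ne_zero hc0)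
  · rintro ⟨c, hc, d, hd, ⟨-, -, hJ, -⟩, -, -⟩
    have hd0 : d ≠ 0 := by
      rintro rfl
      rw [Fintype.card_fin, zero_pow two_ne_zero] at hd
      exact hn.ne (by exact_mod_cast hd)
    rw [aux_jones] at hJ
    rw [aux_nomura]
    refine ⟨Matrix.of fun i j => d * c⁻¹ * c⁻¹ * (W i j)⁻¹, ?_⟩
    rw [aux_theta]
    intro i j l
    have h := hJ i j l
    simp only [Matrix.smul_apply, sinv, Matrix.of_apply, smul_eq_mul] at h ⊢
    have h1 : ∑ k, d⁻¹ * (c * W l k) * ((c * W k j)⁻¹ * (d⁻¹ * (c * W k i)))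
        = (d⁻¹ * d⁻¹ * c) * ∑ k, W l k * (W k i * (W k j)⁻¹) := by
      rw [Finset.mul_sum]
      refine Finset.sum_congr rfl fun k _ => ?_
      have := hW.1 k j
      field_simp
    rw [h1] at h
    apply mul_left_cancel₀ (a := d⁻¹ * d⁻¹ * c) (by simp [hd0, hc])
    rw [h]
    have := hW.1 l j
    have := hW.1 i j
    field_simp
  · intro h
    obtain ⟨S, hS⟩ := aux_nomura.mp h
    rw [aux_theta] at hS
    refine ⟨?_, fun M T hT => (aux_thetaT hn hW hS).mp hT⟩
    ext M
    simp only [Set.mem_ofPred_eq, aux_nomura, aux_thetaT hn hW hS]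
end

section
/- Let A and B be n×n type-II matrices. If F ∈ N_A, G ∈ N_{A,B} and H ∈ N_B, then F∘G ∈ N_{A,B} and G∘H ∈ N_{A,B}, with Θ_{A,B}(F∘G) = n^{-1}·Θ_A(F)·Θ_{A,B}(G) and Θ_{A,B}(G∘H) = n^{-1}·Θ_{A,B}(G)·Θ_B(H)ᵀ. -/
open Matrix

variable {m : Type*} [Fintype m] [DecidableEq m]

theorem aux_recover {n : ℕ} (A F SF : Matrix (Fin n) (Fin n) ℂ)
    (hA : IsTypeII A) (hF : IsTheta A (sinv A) F SF) (k l i : Fin n) :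
    (n : ℂ) * (F k l * A l i) = ∑ r, SF i r * (A k i * (A k r)⁻¹) * A l r := by
  have h1 : ∀ r, SF i r * (A k i * (A k r)⁻¹) = ∑ x, F k x * (A x i * (A x r)⁻¹) := by
    intro r
    have := congrFun (hF i r) k
    simp only [Matrix.mulVec, dotProduct, colProd, sinv, Matrix.of_apply, Pi.smul_apply,
      smul_eq_mul] at this
    exact this.symm
  have h2 : ∀ x, ∑ r, A l r * (A x r)⁻¹ = if l = x then (n : ℂ) else 0 := by
    intro x
    have := congrFun (congrFun hA.2 l) x
    simpa [Matrix.mul_apply, sinv, Matrix.one_apply] using this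
  simp_rw [h1, Finset.sum_mul]
  rw [Finset.sum_comm]
  have h3 : ∀ x, ∑ r, F k x * (A x i * (A x r)⁻¹) * A l r
      = F k x * A x i * (if l = x then (n : ℂ) else 0) := by
    intro x
    rw [← h2, Finset.mul_sum]
    exact Finset.sum_congr rfl fun r _ => by ring
  simp_rw [h3]
  simp
  ring

theorem aux_left_s8 {n : ℕ} (hn : 0 < n) (A B F G SF SG : Matrix (Fin n) (Fin n) ℂ)
    (hA : IsTypeII A) (hF : IsTheta A (sinv A) F SF) (hG : IsTheta A B G SG) :
    IsTheta A B (F ⊙ G) ((n : ℂ)⁻¹ • (SF * SG)) := by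
  intro i j
  funext k
  have hn' : (n : ℂ) ≠ 0 := by exact_mod_cast hn.ne'
  have hg : ∀ r, ∑ l, G k l * (A l r * B l j) = SG r j * (A k r * B k j) := by
    intro r
    have := congrFun (hG r j) k
    simpa only [Matrix.mulVec, dotProduct, colProd, Pi.smul_apply, smul_eq_mul] using this
  simp only [Matrix.mulVec, dotProduct, colProd, Pi.smul_apply, smul_eq_mul,
    Matrix.hadamard_apply, Matrix.smul_apply, Matrix.mul_apply]
  apply mul_left_cancel₀ hn'
  calc (n : ℂ) * ∑ l, F k l * G k l * (A l i * B l j)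
      = ∑ l, ((n : ℂ) * (F k l * A l i)) * (G k l * B l j) := by
        rw [Finset.mul_sum]
        exact Finset.sum_congr rfl fun l _ => by ring
    _ = ∑ l, ∑ r, SF i r * (A k i * (A k r)⁻¹) * (G k l * (A l r * B l j)) := by
        refine Finset.sum_congr rfl fun l _ => ?_
        rw [aux_recover A F SF hA hF, Finset.sum_mul]
        exact Finset.sum_congr rfl fun r _ => by ring
    _ = ∑ r, SF i r * (A k i * (A k r)⁻¹) * (SG r j * (A k r * B k j)) := by
        rw [Finset.sum_comm]
        refine Finset.sum_congr rfl fun r _ => ?_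
        rw [← Finset.mul_sum, hg]
    _ = (∑ r, SF i r * SG r j) * (A k i * B k j) := by
        rw [Finset.sum_mul]
        refine Finset.sum_congr rfl fun r _ => ?_
        have := hA.1 k r
        field_simp
    _ = _ := by field_simp

theorem aux_swap {n : ℕ} {A B G S : Matrix (Fin n) (Fin n) ℂ} (h : IsTheta A B G S) :
    IsTheta B A G Sᵀ := by
  intro i j
  have e : colProd B A i j = colProd A B j i := by
    funext k
    exact mul_comm _ _
  rw [e]
  exact h j i

theorem schur_products_in_NAB {n : ℕ} (hn : 0 < n)
    (A B F G H SF SG SH : Matrix (Fin n) (Fin n) ℂ)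
    (hA : IsTypeII A) (hB : IsTypeII B)
    (hF : IsTheta A (sinv A) F SF) (hG : IsTheta A B G SG)
    (hH : IsTheta B (sinv B) H SH) :
    IsTheta A B (F ⊙ G) ((n : ℂ)⁻¹ • (SF * SG)) ∧
    IsTheta A B (G ⊙ H) ((n : ℂ)⁻¹ • (SG * SHᵀ)) := by
  refine ⟨aux_left_s8 hn A B F G SF SG hA hF hG, ?_⟩
  have := aux_swap (aux_left_s8 hn B A H G SH SGᵀ hB hH (aux_swap hG))
  rw [Matrix.transpose_smul, Matrix.transpose_mul, Matrix.transpose_transpose,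
    Matrix.hadamard_comm] at this
  exact this
end

section
/- Let A and B be n×n type-II matrices. Suppose N_{A,B} contains a Schur invertible matrix G, and let H = Θ_{A,B}(G). Then N_{A,B} = {G∘F : F ∈ N_A}, and {Θ_{A,B}(M)·Hᵀ : M ∈ N_{A,B}} = N_{Aᵀ}. -/
open Matrix

variable {m : Type*} [Fintype m] [DecidableEq m]

lemma theta_row {m : Type*} [Fintype m] [DecidableEq m] (A B M S : Matrix m m ℂ) :
    IsTheta A B M S ↔ ∀ l, Aᵀ * diagonal (M l) * B = diagonal (A l) * S * diagonal (B l) := by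
  constructor
  · intro h l
    ext i j
    have := congrFun (h i j) l
    simp only [mulVec, dotProduct, colProd, Pi.smul_apply, smul_eq_mul] at this
    rw [Matrix.mul_diagonal, Matrix.diagonal_mul, Matrix.mul_apply]
    simp only [Matrix.mul_diagonal, Matrix.transpose_apply]
    calc _ = ∑ k, M l k * (A k i * B k j) := Finset.sum_congr rfl fun k _ => by ring
      _ = _ := by rw [this]; ring
  · intro h i j
    ext l
    have := congrFun (congrFun (h l) i) j
    rw [Matrix.mul_diagonal, Matrix.diagonal_mul, Matrix.mul_apply] at this
    simp only [Matrix.mul_diagonal, Matrix.transpose_apply] at this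
    simp only [mulVec, dotProduct, colProd, Pi.smul_apply, smul_eq_mul]
    calc _ = ∑ k, A k i * M l k * B k j := Finset.sum_congr rfl fun k _ => by ring
      _ = _ := by rw [this]; ring

lemma theta_col {m : Type*} [Fintype m] [DecidableEq m] (A B M S : Matrix m m ℂ) :
    IsTheta A B M S ↔ ∀ i, M * diagonal (Aᵀ i) * B = diagonal (Aᵀ i) * B * diagonal (S i) := by
  constructor
  · intro h i
    ext l j
    have := congrFun (h i j) l
    simp only [mulVec, dotProduct, colProd, Pi.smul_apply, smul_eq_mul] at this
    rw [Matrix.mul_diagonal, Matrix.diagonal_mul, Matrix.mul_apply]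
    simp only [Matrix.mul_diagonal, Matrix.transpose_apply]
    calc _ = ∑ k, M l k * (A k i * B k j) := Finset.sum_congr rfl fun k _ => by ring
      _ = _ := by rw [this]; ring
  · intro h i j
    ext l
    have := congrFun (congrFun (h i) l) j
    rw [Matrix.mul_diagonal, Matrix.diagonal_mul, Matrix.mul_apply] at this
    simp only [Matrix.mul_diagonal, Matrix.transpose_apply] at this
    simp only [mulVec, dotProduct, colProd, Pi.smul_apply, smul_eq_mul]
    calc _ = ∑ k, M l k * A k i * B k j := Finset.sum_congr rfl fun k _ => by ring
      _ = _ := by rw [this]; ring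

lemma theta_swap {m : Type*} [Fintype m] [DecidableEq m] {A B M S : Matrix m m ℂ}
    (h : IsTheta A B M S) : IsTheta B A M Sᵀ := by
  intro i j
  have e : colProd B A i j = colProd A B j i := by
    ext k; simp [colProd, mul_comm]
  rw [e, h j i]; rfl

lemma nomura_iff {m : Type*} [Fintype m] [DecidableEq m] {A B M : Matrix m m ℂ} :
    InNomura A B M ↔ ∃ S, IsTheta A B M S := by
  constructor
  · intro h
    choose f hf using h
    exact ⟨Matrix.of f, hf⟩
  · rintro ⟨S, h⟩ i j
    exact ⟨_, h i j⟩

lemma theta_smul_s10 {m : Type*} [Fintype m] [DecidableEq m] {A B M S : Matrix m m ℂ} (c : ℂ)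
    (h : IsTheta A B M S) : IsTheta A B (c • M) (c • S) := by
  intro i j
  rw [Matrix.smul_mulVec, h i j, Matrix.smul_apply, smul_assoc]

lemma diag_sinv {m : Type*} [Fintype m] [DecidableEq m] {A : Matrix m m ℂ}
    (h : ∀ i j, A i j ≠ 0) (l : m) : diagonal (A l) * diagonal (sinv A l) = 1 := by
  rw [Matrix.diagonal_mul_diagonal, ← Matrix.diagonal_one]
  congr 1; ext k; simp [sinv, h l k]

lemma diag_sinv2 {m : Type*} [Fintype m] [DecidableEq m] {A : Matrix m m ℂ}
    (h : ∀ i j, A i j ≠ 0) (l : m) : diagonal (sinv A l) * diagonal (A l) = 1 := by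
  rw [Matrix.diagonal_mul_diagonal, ← Matrix.diagonal_one]
  congr 1; ext k; simp [sinv, h l k]

lemma sinv_sinv' {m : Type*} (A : Matrix m m ℂ) : sinv (sinv A) = A := by
  ext; simp [sinv]

lemma sinv_tr {m : Type*} (A : Matrix m m ℂ) : sinv Aᵀ = (sinv A)ᵀ := rfl

/-- the other three forms of the type-II condition -/
lemma typeII_forms {m : Type*} [Fintype m] [DecidableEq m] [Nonempty m] {A : Matrix m m ℂ}
    (h : IsTypeII A) :
    sinv A * Aᵀ = (Fintype.card m : ℂ) • (1 : Matrix m m ℂ) ∧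
    (sinv A)ᵀ * A = (Fintype.card m : ℂ) • (1 : Matrix m m ℂ) ∧
    Aᵀ * sinv A = (Fintype.card m : ℂ) • (1 : Matrix m m ℂ) := by
  have hn : (Fintype.card m : ℂ) ≠ 0 := by simp
  have h1 := h.2
  have h2 : (sinv A)ᵀ * A = (Fintype.card m : ℂ) • (1 : Matrix m m ℂ) := by
    have : A * ((Fintype.card m : ℂ)⁻¹ • (sinv A)ᵀ) = 1 := by
      rw [Matrix.mul_smul, h1, smul_smul, inv_mul_cancel₀ hn, one_smul]
    rw [_root_.mul_eq_one_comm, Matrix.smul_mul] at this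
    rw [← this, smul_smul, mul_inv_cancel₀ hn, one_smul]
  refine ⟨?_, h2, ?_⟩
  · have := congrArg transpose h1
    simpa using this
  · have := congrArg transpose h2
    simpa using this

lemma typeII_tr {m : Type*} [Fintype m] [DecidableEq m] [Nonempty m] {A : Matrix m m ℂ}
    (h : IsTypeII A) : IsTypeII Aᵀ :=
  ⟨fun i j => h.1 j i, by rw [sinv_tr, transpose_transpose]; exact (typeII_forms h).2.2⟩

lemma theta_mul {m : Type*} [Fintype m] [DecidableEq m] [Nonempty m]
    {A B C F F' S S' : Matrix m m ℂ} (hB : IsTypeII B)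
    (h : IsTheta A B F S) (h' : IsTheta (sinv B) C F' S') :
    IsTheta A C (F ⊙ F') ((Fintype.card m : ℂ)⁻¹ • (S * S')) := by
  have hn : (Fintype.card m : ℂ) ≠ 0 := by simp
  rw [theta_row] at *
  intro l
  have e : diagonal ((F ⊙ F') l) = diagonal (F l) * diagonal (F' l) := by
    rw [Matrix.diagonal_mul_diagonal]; rfl
  have e1 : (Aᵀ * diagonal (F l) * B) * ((sinv B)ᵀ * diagonal (F' l) * C)
      = (Fintype.card m : ℂ) • (Aᵀ * diagonal ((F ⊙ F') l) * C) := by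
    calc _ = Aᵀ * diagonal (F l) * (B * (sinv B)ᵀ) * diagonal (F' l) * C := by
            simp only [Matrix.mul_assoc]
      _ = _ := by
            rw [hB.2, e]
            simp only [Matrix.mul_smul, Matrix.smul_mul, Matrix.mul_one, Matrix.mul_assoc]
  have e2 : (diagonal (A l) * S * diagonal (B l)) * (diagonal (sinv B l) * S' * diagonal (C l))
      = diagonal (A l) * (S * S') * diagonal (C l) := by
    calc _ = diagonal (A l) * S * (diagonal (B l) * diagonal (sinv B l)) * S' * diagonal (C l) := by
            simp only [Matrix.mul_assoc]
      _ = _ := by rw [diag_sinv hB.1]; simp only [Matrix.mul_one, Matrix.mul_assoc]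
  rw [h l, h' l, e2] at e1
  rw [Matrix.mul_smul, Matrix.smul_mul, e1, smul_smul, inv_mul_cancel₀ hn, one_smul]

lemma theta_transpose {m : Type*} [Fintype m] [DecidableEq m] [Nonempty m]
    {A B M S : Matrix m m ℂ} (hA : ∀ i j, A i j ≠ 0) (hB : IsTypeII B)
    (h : IsTheta A B M S) : IsTheta (sinv A) (sinv B) Mᵀ S := by
  have hn : (Fintype.card m : ℂ) ≠ 0 := by simp
  rw [theta_col] at *
  intro i
  obtain ⟨f1, f2, f3⟩ := typeII_forms hB
  have hA' : ∀ i j, Aᵀ i j ≠ 0 := fun i j => hA j i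
  have d1 := diag_sinv hA' i
  have d2 := diag_sinv2 hA' i
  have t := congrArg transpose (h i)
  simp only [transpose_mul, diagonal_transpose] at t
  rw [← sinv_tr]
  set D := diagonal (Aᵀ i)
  set E := diagonal (sinv Aᵀ i)
  have t2 : E * (sinv B * (Bᵀ * (D * Mᵀ)) * E * sinv B)
      = E * (sinv B * (diagonal (S i) * (Bᵀ * D)) * E * sinv B) := by rw [t]
  have l1 : E * (sinv B * (Bᵀ * (D * Mᵀ)) * E * sinv B)
      = (Fintype.card m : ℂ) • (Mᵀ * E * sinv B) := by
    calc _ = E * ((sinv B * Bᵀ) * D * Mᵀ * E * sinv B) := by simp only [Matrix.mul_assoc]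
      _ = (Fintype.card m : ℂ) • ((E * D) * Mᵀ * E * sinv B) := by
        rw [f1]; simp only [Matrix.mul_smul, Matrix.smul_mul, Matrix.one_mul, Matrix.mul_assoc]
      _ = _ := by rw [d2, Matrix.one_mul]
  have l2 : E * (sinv B * (diagonal (S i) * (Bᵀ * D)) * E * sinv B)
      = (Fintype.card m : ℂ) • (E * sinv B * diagonal (S i)) := by
    calc _ = E * (sinv B * diagonal (S i) * Bᵀ * (D * E) * sinv B) := by
            simp only [Matrix.mul_assoc]
      _ = E * (sinv B * diagonal (S i) * (Bᵀ * sinv B)) := by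
            rw [d1]; simp only [Matrix.mul_one, Matrix.mul_assoc]
      _ = _ := by rw [f3]; simp only [Matrix.mul_smul, Matrix.mul_one, Matrix.mul_assoc]
  rw [l1, l2] at t2
  exact smul_right_injective _ hn t2

lemma theta_dual_s10 {m : Type*} [Fintype m] [DecidableEq m] [Nonempty m]
    {A F S : Matrix m m ℂ} (hA : IsTypeII A) (h : IsTheta A (sinv A) F S) :
    IsTheta Aᵀ (sinv Aᵀ) S ((Fintype.card m : ℂ) • Fᵀ) := by
  have key : IsTheta (sinv Aᵀ) Aᵀ S ((Fintype.card m : ℂ) • F) := by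
    rw [theta_row] at h
    rw [theta_col]
    intro l
    obtain ⟨f1, f2, f3⟩ := typeII_forms hA
    have d2 := diag_sinv2 hA.1 l
    rw [← sinv_tr, transpose_transpose]
    have e : diagonal (((Fintype.card m : ℂ) • F) l) = (Fintype.card m : ℂ) • diagonal (F l) := by
      rw [← Matrix.diagonal_smul]; rfl
    rw [e]
    set E := diagonal (sinv A l)
    calc S * E * Aᵀ = (E * diagonal (A l)) * S * E * Aᵀ := by rw [d2, Matrix.one_mul]
      _ = E * (diagonal (A l) * S * E) * Aᵀ := by simp only [Matrix.mul_assoc]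
      _ = E * (Aᵀ * diagonal (F l) * sinv A) * Aᵀ := by rw [← h l]
      _ = E * Aᵀ * diagonal (F l) * (sinv A * Aᵀ) := by simp only [Matrix.mul_assoc]
      _ = _ := by rw [f1]; simp only [Matrix.mul_smul, Matrix.mul_one]
  have := theta_swap key
  rwa [transpose_smul] at this

lemma theta_dual_surj {m : Type*} [Fintype m] [DecidableEq m] [Nonempty m]
    {A P : Matrix m m ℂ} (hA : IsTypeII A) (h : InNomura Aᵀ (sinv Aᵀ) P) :
    ∃ F, IsTheta A (sinv A) F P := by
  have hn : (Fintype.card m : ℂ) ≠ 0 := by simp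
  obtain ⟨T, hT⟩ := nomura_iff.1 h
  have h1 := theta_dual_s10 (typeII_tr hA) hT
  rw [transpose_transpose] at h1
  have hs : IsTypeII (sinv A) := ⟨fun i j => inv_ne_zero (hA.1 i j), by
    rw [sinv_sinv']; exact (typeII_forms hA).1⟩
  have h2 := theta_swap (theta_transpose hA.1 hs h1)
  rw [sinv_sinv', transpose_smul, transpose_transpose] at h2
  have h3 := theta_smul_s10 (Fintype.card m : ℂ)⁻¹ h2
  rw [smul_smul, inv_mul_cancel₀ hn, one_smul] at h3
  exact ⟨_, h3⟩

lemma theta_inv {m : Type*} [Fintype m] [DecidableEq m] [Nonempty m]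
    {A B G H : Matrix m m ℂ} (hA : IsTypeII A) (hB : IsTypeII B)
    (hG : ∀ i j, G i j ≠ 0) (h : IsTheta A B G H) :
    IsUnit H ∧ ∃ K, IsTheta (sinv B) (sinv A) (sinv G) K := by
  have hn : (Fintype.card m : ℂ) ≠ 0 := by simp
  set c : ℂ := (Fintype.card m : ℂ) with hc
  rw [theta_row] at h
  obtain ⟨f1, f2, f3⟩ := typeII_forms hA
  have key : ∀ l, H * (diagonal (B l) * ((sinv B)ᵀ * diagonal (sinv G l) * sinv A)
      * diagonal (A l)) = (c * c) • (1 : Matrix m m ℂ) := by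
    intro l
    have dA := diag_sinv2 hA.1 l
    calc _ = (diagonal (sinv A l) * diagonal (A l)) * H * (diagonal (B l) *
          ((sinv B)ᵀ * diagonal (sinv G l) * sinv A) * diagonal (A l)) := by
            rw [dA, Matrix.one_mul]
      _ = diagonal (sinv A l) * (diagonal (A l) * H * diagonal (B l)) *
          ((sinv B)ᵀ * diagonal (sinv G l) * sinv A) * diagonal (A l) := by
            simp only [Matrix.mul_assoc]
      _ = diagonal (sinv A l) * (Aᵀ * (diagonal (G l) * (B * (sinv B)ᵀ)
          * diagonal (sinv G l)) * sinv A) * diagonal (A l) := by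
            rw [← h l]; simp only [Matrix.mul_assoc]
      _ = c • (diagonal (sinv A l) * (Aᵀ * (diagonal (G l)
          * diagonal (sinv G l)) * sinv A) * diagonal (A l)) := by
            rw [hB.2]; simp only [Matrix.mul_smul, Matrix.smul_mul, Matrix.mul_one, hc]
      _ = _ := by
            rw [diag_sinv hG, Matrix.mul_one, f3]
            simp only [Matrix.mul_smul, Matrix.smul_mul, Matrix.mul_one, dA, smul_smul, hc]
  have hu : IsUnit H := by
    obtain ⟨l⟩ := ‹Nonempty m›
    have : H * ((c * c)⁻¹ • (diagonal (B l) * ((sinv B)ᵀ * diagonal (sinv G l) * sinv A)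
      * diagonal (A l))) = 1 := by
      rw [Matrix.mul_smul, key l, smul_smul, inv_mul_cancel₀ (mul_ne_zero hn hn), one_smul]
    exact ((isUnit_iff_isUnit_det _).2 (isUnit_det_of_right_inverse this))
  refine ⟨hu, (c * c) • H⁻¹, ?_⟩
  have hd := (isUnit_iff_isUnit_det _).1 hu
  rw [theta_row]
  intro l
  have k2 := congrArg (H⁻¹ * ·) (key l)
  simp only [nonsing_inv_mul_cancel_left _ _ hd, Matrix.mul_smul, Matrix.mul_one] at k2
  rw [← k2]
  calc _ = (diagonal (sinv B l) * diagonal (B l)) * ((sinv B)ᵀ * diagonal (sinv G l) * sinv A)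
        * (diagonal (A l) * diagonal (sinv A l)) := by
          rw [diag_sinv hA.1, diag_sinv2 hB.1, Matrix.one_mul, Matrix.mul_one]
    _ = _ := by simp only [Matrix.mul_assoc]

lemma nomura_mul {m : Type*} [Fintype m] [DecidableEq m] {A B M N : Matrix m m ℂ}
    (hM : InNomura A B M) (hN : InNomura A B N) : InNomura A B (M * N) := by
  intro i j
  obtain ⟨a, ha⟩ := hM i j
  obtain ⟨b, hb⟩ := hN i j
  exact ⟨b * a, by rw [← Matrix.mulVec_mulVec, hb, Matrix.mulVec_smul, ha, smul_smul]⟩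

lemma nomura_inv {m : Type*} [Fintype m] [DecidableEq m] {A B M : Matrix m m ℂ}
    (hM : InNomura A B M) (hu : IsUnit M) : InNomura A B M⁻¹ := by
  intro i j
  obtain ⟨a, ha⟩ := hM i j
  have hd := (isUnit_iff_isUnit_det _).1 hu
  have e : colProd A B i j = a • (M⁻¹ *ᵥ colProd A B i j) := by
    rw [← Matrix.mulVec_smul, ← ha, Matrix.mulVec_mulVec, nonsing_inv_mul _ hd, Matrix.one_mulVec]
  refine ⟨a⁻¹, ?_⟩
  by_cases h0 : a = 0
  · rw [h0, zero_smul] at e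
    rw [e]; simp
  · conv_rhs => rw [e]
    rw [smul_smul, inv_mul_cancel₀ h0, one_smul]

theorem NAB_from_schur_invertible_element {n : ℕ} (hn : 0 < n)
    (A B G H : Matrix (Fin n) (Fin n) ℂ)
    (hA : IsTypeII A) (hB : IsTypeII B)
    (hGs : ∀ i j, G i j ≠ 0) (hGH : IsTheta A B G H) :
    {M : Matrix (Fin n) (Fin n) ℂ | InNomura A B M} =
      {M : Matrix (Fin n) (Fin n) ℂ | ∃ F, InNomura A (sinv A) F ∧ M = G ⊙ F} ∧
    {P : Matrix (Fin n) (Fin n) ℂ | ∃ M S, IsTheta A B M S ∧ P = S * Hᵀ} =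
      {P : Matrix (Fin n) (Fin n) ℂ | InNomura Aᵀ (sinv Aᵀ) P} := by
  haveI : Nonempty (Fin n) := ⟨⟨0, hn⟩⟩
  have hc : (Fintype.card (Fin n) : ℂ) ≠ 0 := by simp; omega
  obtain ⟨hu, K, hK⟩ := theta_inv hA hB hGs hGH
  have hGt : IsTheta (sinv B) (sinv A) Gᵀ Hᵀ := theta_swap (theta_transpose hA.1 hB hGH)
  have hsA : IsTypeII (sinv A) := ⟨fun i j => inv_ne_zero (hA.1 i j), by
    rw [sinv_sinv']; exact (typeII_forms hA).1⟩
  have hGF : ∀ F T, IsTheta A (sinv A) F T →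
      IsTheta A B (F ⊙ G) ((Fintype.card (Fin n) : ℂ)⁻¹ • (T * H)) := by
    intro F T hF
    refine theta_mul hsA hF ?_
    rwa [sinv_sinv']
  have hfwd : ∀ M S, IsTheta A B M S → InNomura Aᵀ (sinv Aᵀ) (S * Hᵀ) := by
    intro M S hM
    have h1 := theta_smul_s10 (Fintype.card (Fin n) : ℂ) (theta_mul hB hM hGt)
    rw [smul_smul, mul_inv_cancel₀ hc, one_smul] at h1
    exact nomura_iff.2 ⟨_, theta_dual_s10 hA h1⟩
  constructor
  · ext M
    simp only [Set.mem_setOf_eq]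
    constructor
    · intro hM
      obtain ⟨S, hS⟩ := nomura_iff.1 hM
      refine ⟨M ⊙ sinv G, nomura_iff.2 ⟨_, theta_mul hB hS hK⟩, ?_⟩
      ext i j
      have := hGs i j
      simp only [Matrix.hadamard_apply, sinv, Matrix.of_apply]
      field_simp
    · rintro ⟨F, hF, rfl⟩
      obtain ⟨T, hT⟩ := nomura_iff.1 hF
      rw [Matrix.hadamard_comm]
      exact nomura_iff.2 ⟨_, hGF F T hT⟩
  · ext P
    simp only [Set.mem_setOf_eq]
    constructor
    · rintro ⟨M, S, hM, rfl⟩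
      exact hfwd M S hM
    · intro hP
      have hQ := hfwd G H hGH
      have huQ : IsUnit (H * Hᵀ) := hu.mul ((Matrix.isUnit_transpose _).2 hu)
      obtain ⟨F, hF⟩ := theta_dual_surj hA (nomura_mul hP (nomura_inv hQ huQ))
      have h1 := theta_smul_s10 (Fintype.card (Fin n) : ℂ) (hGF F _ hF)
      rw [smul_smul, mul_inv_cancel₀ hc, one_smul] at h1
      refine ⟨_, _, h1, ?_⟩
      rw [Matrix.mul_assoc, nonsing_inv_mul_cancel_right _ _ ((isUnit_iff_isUnit_det _).1 huQ)]
end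

section
/- Let (A,B) be an invertible Jones pair of n×n complex matrices. Then for every M ∈ N_A one has M ∈ N_B and Θ_B(M)ᵀ = B^{-1}·Θ_A(M)·B. -/
open Matrix

variable {m : Type*} [Fintype m] [DecidableEq m]

theorem solve_row {n : ℕ} {B C : Matrix (Fin n) (Fin n) ℂ} (hBC : B * C = 1)
    {f g : Fin n → ℂ} (h : ∀ j, ∑ p, f p * B p j = g j) (q : Fin n) :
    f q = ∑ j, g j * C j q := by
  have h1 : f ᵥ* B = g := by
    funext j
    exact h j
  have h2 : f = g ᵥ* C := by
    rw [← h1, Matrix.vecMul_vecMul, hBC, Matrix.vecMul_one]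
  exact congrFun h2 q

theorem jones_entry {n : ℕ} {A B : Matrix (Fin n) (Fin n) ℂ}
    (h : ∀ M : Matrix (Fin n) (Fin n) ℂ, A * (B ⊙ (A * M)) = B ⊙ (A * (B ⊙ M)))
    (i j k : Fin n) : ∑ p, A i p * A p k * B p j = A i k * B i j * B k j := by
  have h1 : (A * (B ⊙ (A * Matrix.single k j 1))) i j
      = (B ⊙ (A * (B ⊙ Matrix.single k j 1))) i j := by rw [h]
  simp [Matrix.mul_apply, Matrix.hadamard_apply, Matrix.single_apply] at h1
  calc _ = ∑ p, A i p * (B p j * A p k) := Finset.sum_congr rfl fun p _ => by ring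
    _ = _ := by rw [h1]; ring

/-- key identity -/
theorem jones_K {n : ℕ} {A B C : Matrix (Fin n) (Fin n) ℂ}
    (h : ∀ i j k, ∑ p, A i p * A p k * B p j = A i k * B i j * B k j)
    (hBC : B * C = 1) (i k q : Fin n) :
    A i q * A q k = A i k * ∑ j, B i j * B k j * C j q := by
  have := solve_row hBC (f := fun p => A i p * A p k) (fun j => h i j k) q
  beta_reduce at this
  rw [this, Finset.mul_sum]
  exact Finset.sum_congr rfl fun p _ => by ring

theorem jones_T {n : ℕ} {A B C : Matrix (Fin n) (Fin n) ℂ}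
    (h : ∀ i j k, ∑ p, A i p * A p k * B p j = A i k * B i j * B k j)
    (hA : ∀ i j, A i j ≠ 0) (hBC : B * C = 1) (i r : Fin n) :
    B i r * C r i = A i i * ∑ k, C r k := by
  have hCB : C * B = 1 := mul_eq_one_comm.mp hBC
  have hT : Bᵀ * Cᵀ = 1 := by rw [← Matrix.transpose_mul, hCB, Matrix.transpose_one]
  have h1 : ∀ k, ∑ p, (B i p * C p i) * Bᵀ p k = A i i := by
    intro k
    have := jones_K h hBC i k i
    have h2 : A i k * A i i = A i k * ∑ j, B i j * B k j * C j i := by rw [← this]; ring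
    rw [mul_left_cancel₀ (hA i k) h2]
    exact Finset.sum_congr rfl fun p _ => by simp only [Matrix.transpose_apply]; ring
  have := solve_row hT (f := fun p => B i p * C p i) h1 r
  simp only [Matrix.transpose_apply] at this
  rw [this, Finset.mul_sum]

theorem jones_const {n : ℕ} {A B C : Matrix (Fin n) (Fin n) ℂ}
    (h : ∀ i j k, ∑ p, A i p * A p k * B p j = A i k * B i j * B k j)
    (hA : ∀ i j, A i j ≠ 0) (hBC : B * C = 1) :
    ∀ i i' r, B i r * C r i = B i' r * C r i' := by
  have h0 : ∀ i, A i i * ∑ r, ∑ k, C r k = 1 := by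
    intro i
    have : (B * C) i i = (1 : Matrix (Fin n) (Fin n) ℂ) i i := by rw [hBC]
    simp only [Matrix.mul_apply, Matrix.one_apply_eq] at this
    rw [← this, Finset.mul_sum]
    exact Finset.sum_congr rfl fun r _ => (jones_T h hA hBC i r).symm
  intro i i' r
  rw [jones_T h hA hBC i r, jones_T h hA hBC i' r]
  have hne : (∑ r, ∑ k, C r k) ≠ 0 := by
    intro h1
    have := h0 i
    rw [h1] at this
    simp at this
  have : A i i = A i' i' := mul_right_cancel₀ hne ((h0 i).trans (h0 i').symm)
  rw [this]

theorem theta_B_conjugate {n : ℕ} (hn : 0 < n)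
    (A B M SA : Matrix (Fin n) (Fin n) ℂ)
    (h : IsInvertibleJonesPair A B) (hM : IsTheta A (sinv A) M SA) :
    InNomura B (sinv B) M ∧
    ∃ SB : Matrix (Fin n) (Fin n) ℂ, IsTheta B (sinv B) M SB ∧ SBᵀ = B⁻¹ * SA * B := by
  obtain ⟨⟨hAu, hB0, hj1, hj2⟩, hA0, hBu⟩ := h
  have hn0 : (n : ℂ) ≠ 0 := by exact_mod_cast hn.ne'
  have h1 := jones_entry hj1
  have h2 := jones_entry hj2
  have hBC : B * B⁻¹ = 1 := Matrix.mul_nonsing_inv _ ((Matrix.isUnit_iff_isUnit_det _).mp hBu)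
  have hCB : B⁻¹ * B = 1 := Matrix.nonsing_inv_mul _ ((Matrix.isUnit_iff_isUnit_det _).mp hBu)
  have hAD : A * A⁻¹ = 1 := Matrix.mul_nonsing_inv _ ((Matrix.isUnit_iff_isUnit_det _).mp hAu)
  have hDA : A⁻¹ * A = 1 := Matrix.nonsing_inv_mul _ ((Matrix.isUnit_iff_isUnit_det _).mp hAu)
  set C := B⁻¹ with hC
  set D := A⁻¹ with hD
  have hTBC : Bᵀ * Cᵀ = 1 := by rw [← Matrix.transpose_mul, hCB, Matrix.transpose_one]
  -- `B` is type II
  have hBt : ∀ i r, (n : ℂ) * C r i = (B i r)⁻¹ := by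
    intro i r
    have c1 := jones_const h1 hA0 hBC
    have c2 := jones_const h2 hA0 hTBC
    simp only [Matrix.transpose_apply] at c2
    have : (B * B⁻¹) i i = (1 : Matrix (Fin n) (Fin n) ℂ) i i := by rw [hBC]
    simp only [Matrix.mul_apply, Matrix.one_apply_eq] at this
    have h3 : ∀ s, B i s * C s i = B i r * C r i := by
      intro s
      have := c2 s r i
      exact this
    rw [Finset.sum_congr rfl (fun s _ => h3 s)] at this
    simp at this
    have hb := hB0 i r
    field_simp
    linear_combination this
  -- `A` is type II
  have hAt : ∀ r k, (n : ℂ) * D k r = (A r k)⁻¹ := by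
    intro r k
    have e1 : ∀ j, ∑ i, (D k i * A i k) * B i j = A k k := by
      intro j
      have hTA : Aᵀ * Dᵀ = 1 := by rw [← Matrix.transpose_mul, hDA, Matrix.transpose_one]
      have := solve_row hTA (f := fun p => A p k * B p j) (g := fun i => A i k * B i j * B k j)
        (fun i => by
          rw [← h1 i j k]
          exact Finset.sum_congr rfl fun p _ => by simp only [Matrix.transpose_apply]; ring) k
      simp only [Matrix.transpose_apply] at this
      apply mul_right_cancel₀ (hB0 k j)
      rw [this, Finset.sum_mul]
      exact Finset.sum_congr rfl fun p _ => by ring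
    have e2 := solve_row hBC (f := fun i => D k i * A i k) e1 r
    beta_reduce at e2
    have e3 := jones_T h2 hA0 hTBC k r
    simp only [Matrix.transpose_apply] at e3
    rw [← Finset.mul_sum, ← e3] at e2
    have e4 := hBt r k
    have ha := hA0 r k
    have hb := hB0 r k
    field_simp at e4 ⊢
    linear_combination n * e2 + e4
  have hM' : ∀ i j l, ∑ k, M l k * (A k i * (A k j)⁻¹) = SA i j * (A l i * (A l j)⁻¹) := by
    intro i j l
    have := congrFun (hM i j) l
    simpa [Matrix.mulVec, dotProduct, colProd, sinv] using this
  -- duality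
  have hdual : ∀ l k r, ∑ s, SA r s * A k s * (A l s)⁻¹ = n * M l k * A k r * (A l r)⁻¹ := by
    intro l k r
    have hTA : Dᵀ * Aᵀ = 1 := by rw [← Matrix.transpose_mul, hAD, Matrix.transpose_one]
    have := solve_row hTA (f := fun p => n * M l p * A p r * (A l r)⁻¹)
      (g := fun s => SA r s * (A l s)⁻¹) (fun s => by
        have ha := hA0 l r
        have e : SA r s * (A l s)⁻¹ = (SA r s * (A l r * (A l s)⁻¹)) * (A l r)⁻¹ := by
          field_simp
        rw [e, ← hM' r s l, Finset.sum_mul]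
        refine Finset.sum_congr rfl fun p _ => ?_
        rw [← hAt p s, Matrix.transpose_apply]
        ring) k
    simp only [Matrix.transpose_apply] at this
    rw [this]
    exact Finset.sum_congr rfl fun p _ => by ring
  have main : ∀ i j l, ∑ k, M l k * (B k i * (B k j)⁻¹)
      = (C * SA * B) j i * (B l i * (B l j)⁻¹) := by
    intro i j l
    have hTC : Bᵀ * Cᵀ = 1 := hTBC
    have claim : ∀ r, ∑ j, (B l j * ∑ k, M l k * (B k i * (B k j)⁻¹)) * Bᵀ j r
        = B l i * (SA * B) r i := by
      intro r
      have a1 : ∑ j, (B l j * ∑ k, M l k * (B k i * (B k j)⁻¹)) * Bᵀ j r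
          = ∑ k, M l k * B k i * n * ∑ j, B l j * B r j * C j k := by
        simp only [Finset.mul_sum, Finset.sum_mul]
        rw [Finset.sum_comm]
        refine Finset.sum_congr rfl fun k _ => Finset.sum_congr rfl fun j _ => ?_
        rw [← hBt k j, Matrix.transpose_apply]
        ring
      have a2 : ∀ k, M l k * B k i * n * ∑ j, B l j * B r j * C j k
          = ∑ s, SA r s * A k s * (A l s)⁻¹ * (B k i * A l k) := by
        intro k
        rw [← Finset.sum_mul, hdual l k r]
        have := jones_K h1 hBC l r k
        have ha := hA0 l r
        field_simp
        linear_combination (-(M l k * B k i)) * this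
      rw [a1, Finset.sum_congr rfl fun k _ => a2 k, Finset.sum_comm, Matrix.mul_apply,
        Finset.mul_sum]
      refine Finset.sum_congr rfl fun s _ => ?_
      have a3 := h1 l i s
      have ha := hA0 l s
      have a4 : ∑ k, SA r s * A k s * (A l s)⁻¹ * (B k i * A l k)
          = SA r s * (A l s)⁻¹ * ∑ p, A l p * A p s * B p i := by
        rw [Finset.mul_sum]
        exact Finset.sum_congr rfl fun k _ => by ring
      rw [a4, a3]
      field_simp
    have := solve_row hTC (f := fun j => B l j * ∑ k, M l k * (B k i * (B k j)⁻¹)) claim j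
    simp only [Matrix.transpose_apply] at this
    have e : (C * SA * B) j i * B l i = ∑ r, B l i * (SA * B) r i * C j r := by
      rw [Matrix.mul_assoc, Matrix.mul_apply, Finset.sum_mul]
      exact Finset.sum_congr rfl fun k _ => by ring
    rw [← mul_assoc, e, ← this]
    have hb := hB0 l j
    rw [mul_comm (B l j), mul_assoc, mul_inv_cancel₀ hb, mul_one]
  have hT : IsTheta B (sinv B) M (C * SA * B)ᵀ := by
    intro i j
    funext l
    have := main i j l
    simpa [Matrix.mulVec, dotProduct, colProd, sinv] using this
  exact ⟨fun i j => ⟨_, hT i j⟩, _, hT, Matrix.transpose_transpose _⟩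
end

section
/- Let (A,B) be an invertible Jones pair of n×n complex matrices. Then N_{A,B} = N_{A,Bᵀ}. If moreover A is symmetric, then N_{A,B} is closed under transposition: M ∈ N_{A,B} if and only if Mᵀ ∈ N_{A,B}. -/
open Matrix

variable {m : Type*} [Fintype m] [DecidableEq m]

theorem jp_entry {n : ℕ} {A B : Matrix (Fin n) (Fin n) ℂ}
    (h : ∀ M : Matrix (Fin n) (Fin n) ℂ, A * (B ⊙ (A * M)) = B ⊙ (A * (B ⊙ M))) (l i j : Fin n) :
    ∑ k, A l k * A k i * B k j = B i j * A l i * B l j := by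
  have := congrFun (congrFun (h (Matrix.single i j 1)) l) j
  simp only [Matrix.mul_apply, Matrix.hadamard_apply, Matrix.single_apply] at this
  simp only [mul_ite, mul_one, mul_zero, and_true, Finset.sum_ite_eq, Finset.mem_univ, if_true] at this
  rw [show B i j * A l i * B l j = B l j * (A l i * B i j) by ring, ← this]
  exact Finset.sum_congr rfl fun k _ => by ring

theorem inv_row {n : ℕ} {B C : Matrix (Fin n) (Fin n) ℂ} (h : C * B = 1) (x y : Fin n → ℂ)
    (hxy : ∀ l, ∑ j, B l j * x j = y l) (j : Fin n) : x j = ∑ l, C j l * y l := by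
  have h1 : B *ᵥ x = y := funext hxy
  have h2 : C *ᵥ y = x := by rw [← h1, Matrix.mulVec_mulVec, h, Matrix.one_mulVec]
  exact (congrFun h2 j).symm

/-- Uniform type II lemma. -/
theorem typeII_aux {n : ℕ} {B C : Matrix (Fin n) (Fin n) ℂ} (hBC : B * C = 1) (hCB : C * B = 1)
    (a t : Fin n → ℂ) (hB : ∀ k j, B k j * C j k = a k * t j) (k j : Fin n) :
    (n : ℂ) * (B k j * C j k) = 1 := by
  have h1 : ∀ k, a k * ∑ j, t j = 1 := fun k => by
    have := congrFun (congrFun hBC k) k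
    rw [Matrix.mul_apply, Matrix.one_apply_eq] at this
    rw [Finset.mul_sum, ← this]
    exact Finset.sum_congr rfl fun j _ => (hB k j).symm
  have hs : ∑ j, t j ≠ 0 := fun h0 => by simpa [h0] using h1 k
  have ha : ∀ k', a k' = a k := fun k' => mul_right_cancel₀ hs ((h1 k').trans (h1 k).symm)
  have h2 := congrFun (congrFun hCB j) j
  rw [Matrix.mul_apply, Matrix.one_apply_eq] at h2
  rw [← h2, hB]
  have : ∀ x ∈ Finset.univ, C j x * B x j = a k * t j := fun x _ => by
    rw [mul_comm, hB, ha x]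
  rw [Finset.sum_congr rfl this]
  simp

theorem swap_cols {n : ℕ} {A B : Matrix (Fin n) (Fin n) ℂ} (hA : ∀ i j, A i j ≠ 0) (hB : IsUnit B)
    (h1 : ∀ l i j, ∑ k, A l k * A k i * B k j = B i j * A l i * B l j)
    (h2 : ∀ l i j, ∑ k, A l k * A k i * Bᵀ k j = Bᵀ i j * A l i * Bᵀ l j) :
    (∀ k, ∃ i, ∀ j, B k j = B j i) ∧ (∀ i, ∃ k, ∀ j, B j i = B k j) := by
  have hd : IsUnit B.det := (Matrix.isUnit_iff_isUnit_det B).1 hB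
  have hl := Matrix.nonsing_inv_mul B hd
  have hr := Matrix.mul_nonsing_inv B hd
  set C := B⁻¹ * Bᵀ with hC
  have hBC : B * C = Bᵀ := by rw [hC, ← Matrix.mul_assoc, hr, Matrix.one_mul]
  have key : ∀ j k, C j k ≠ 0 → ∀ i, B i j = B k i := by
    intro j k hjk i
    let G : Matrix (Fin n) (Fin n) ℂ := Matrix.of fun l k => A l k * A k i / A l i
    have g1 : G * B = B * Matrix.diagonal (fun j => B i j) := by
      ext l j
      rw [Matrix.mul_diagonal, Matrix.mul_apply]
      have := h1 l i j
      simp only [G, Matrix.of_apply]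
      have h3 : ∀ k ∈ Finset.univ, A l k * A k i / A l i * B k j = (A l k * A k i * B k j) / A l i :=
        fun k _ => by ring
      rw [Finset.sum_congr rfl h3, ← Finset.sum_div, this]
      field_simp [hA l i]
    have g2 : G * Bᵀ = Bᵀ * Matrix.diagonal (fun j => B j i) := by
      ext l j
      rw [Matrix.mul_diagonal, Matrix.mul_apply]
      have := h2 l i j
      simp only [G, Matrix.of_apply]
      have h3 : ∀ k ∈ Finset.univ, A l k * A k i / A l i * Bᵀ k j = (A l k * A k i * Bᵀ k j) / A l i :=
        fun k _ => by ring
      rw [Finset.sum_congr rfl h3, ← Finset.sum_div, this, Matrix.transpose_apply B i j]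
      field_simp [hA l i]
    have g3 : Matrix.diagonal (fun j => B i j) * C = C * Matrix.diagonal (fun j => B j i) := by
      have : B * (Matrix.diagonal (fun j => B i j) * C) = B * (C * Matrix.diagonal (fun j => B j i)) := by
        rw [← Matrix.mul_assoc, ← g1, Matrix.mul_assoc, hBC, g2, ← Matrix.mul_assoc, hBC]
      have := congrArg (fun X => B⁻¹ * X) this
      simpa only [← Matrix.mul_assoc, hl, Matrix.one_mul] using this
    have := congrFun (congrFun g3 j) k
    rw [Matrix.diagonal_mul, Matrix.mul_diagonal, mul_comm] at this
    exact mul_left_cancel₀ hjk this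
  have hCd : C.det ≠ 0 := by
    rw [hC, Matrix.det_mul, Matrix.det_transpose, ← Matrix.det_mul, hl]; simp
  constructor
  · intro k
    by_contra! hcon
    refine hCd (Matrix.det_eq_zero_of_column_eq_zero k fun j => ?_)
    by_contra hne
    obtain ⟨i, hi⟩ := hcon j
    exact hi (key j k hne i).symm
  · intro j
    by_contra! hcon
    refine hCd (Matrix.det_eq_zero_of_row_eq_zero j fun k => ?_)
    by_contra hne
    obtain ⟨i, hi⟩ := hcon k
    exact hi (key j k hne i)

theorem transp_aux {n : ℕ} (hn : (n : ℂ) ≠ 0) {A B : Matrix (Fin n) (Fin n) ℂ}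
    (hA : ∀ i j, A i j ≠ 0) (hB : ∀ i j, B i j ≠ 0) (uA : IsUnit A) (uB : IsUnit B)
    (h1 : ∀ l i j, ∑ k, A l k * A k i * B k j = B i j * A l i * B l j)
    (hs : ∀ i j, A i j = A j i) (M : Matrix (Fin n) (Fin n) ℂ) (hM : InNomura A B M) :
    InNomura A B Mᵀ := by
  have hd : IsUnit B.det := (Matrix.isUnit_iff_isUnit_det B).1 uB
  have hl := Matrix.nonsing_inv_mul B hd
  have hr := Matrix.mul_nonsing_inv B hd
  have hdA : IsUnit A.det := (Matrix.isUnit_iff_isUnit_det A).1 uA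
  have hlA := Matrix.nonsing_inv_mul A hdA
  have hrA := Matrix.mul_nonsing_inv A hdA
  have hlT : (B⁻¹)ᵀ * Bᵀ = 1 := by rw [← Matrix.transpose_mul, hr, Matrix.transpose_one]
  -- B is type II
  have tB : ∀ k j, B⁻¹ j k = 1 / (n * B k j) := by
    intro k j
    have := typeII_aux hr hl (fun k => A k k) (fun j => ∑ l, B⁻¹ j l * 1) (fun k j => by
      have e1 : ∀ i, ∑ j, B i j * (B k j * B⁻¹ j k) = A k k := by
        intro i
        -- coefficients of the combination
        have e2 : ∀ j', ∑ q, Bᵀ j' q * (A k q * A q i) = B i j' * A k i * B k j' := fun j' => by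
          rw [← h1]; exact Finset.sum_congr rfl fun q _ => by rw [Matrix.transpose_apply]; ring
        have e3 := inv_row hlT _ _ e2 k
        simp only [Matrix.transpose_apply] at e3
        apply mul_right_cancel₀ (hA k i)
        rw [e3, Finset.sum_mul]
        exact Finset.sum_congr rfl fun q _ => by ring
      have e4 := inv_row hl _ (fun _ => A k k) e1 j
      rw [e4, Finset.mul_sum]
      exact Finset.sum_congr rfl fun q _ => by ring) k j
    rw [eq_div_iff (mul_ne_zero hn (hB k j)), ← this]; ring
  -- A^{-1} relation
  have hinvA : ∀ l i j, ∑ k, A⁻¹ l k * (B k j * A k i * B i j) = B l j * A l i := by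
    intro l i j
    symm
    refine inv_row hlA (fun l => B l j * A l i) _ (fun m => ?_) l
    rw [show B m j * A m i * B i j = B i j * A m i * B m j by ring, ← h1]
    exact Finset.sum_congr rfl fun q _ => by ring
  have tA : ∀ k j, A⁻¹ j k = 1 / (n * A k j) := by
    intro k j
    have := typeII_aux hrA hlA (fun k => ∑ l, B⁻¹ᵀ k l * 1) (fun j => A j j) (fun k j => by
      have e1 : ∀ i, ∑ k, Bᵀ i k * (A k j * A⁻¹ j k) = A j j := by
        intro i
        apply mul_left_cancel₀ (hB j i)
        rw [← hinvA j j i, Finset.mul_sum]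
        exact Finset.sum_congr rfl fun q _ => by rw [Matrix.transpose_apply]; ring
      have e4 := inv_row hlT _ (fun _ => A j j) e1 k
      rw [e4, Finset.sum_mul]
      exact Finset.sum_congr rfl fun q _ => by ring) k j
    rw [eq_div_iff (mul_ne_zero hn (hA k j)), ← this]; ring
  -- orthogonality
  have O1 : ∀ m k, ∑ p, B m p / B k p = if m = k then (n : ℂ) else 0 := by
    intro m k
    have := congrFun (congrFun hr m) k
    rw [Matrix.mul_apply, Matrix.one_apply] at this
    have h3 : ∑ p, B m p / B k p = n * ∑ p, B m p * B⁻¹ p k := by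
      rw [Finset.mul_sum]
      exact Finset.sum_congr rfl fun p _ => by rw [tB]; field_simp [hB k p]
    rw [h3, this]; simp
  have O2 : ∀ j q, ∑ k, B k j / B k q = if q = j then (n : ℂ) else 0 := by
    intro j q
    have := congrFun (congrFun hl q) j
    rw [Matrix.mul_apply, Matrix.one_apply] at this
    have h3 : ∑ k, B k j / B k q = n * ∑ k, B⁻¹ q k * B k j := by
      rw [Finset.mul_sum]
      exact Finset.sum_congr rfl fun p _ => by rw [tB]; field_simp [hB p q]
    rw [h3, this]; simp
  -- P1
  have P1 : ∀ k l p, ∑ i, B i p * A k i / A l i = n * A l k * B l p / B k p := by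
    intro k l p
    have := hinvA l k p
    rw [eq_div_iff (hB k p), show (n:ℂ) * A l k * B l p = n * (B l p * A l k) by ring, ← this,
      Finset.sum_mul, Finset.mul_sum]
    refine Finset.sum_congr rfl fun q _ => ?_
    rw [tA, hs k q, hs l q]
    have := hA q l
    field_simp
  -- P2
  have P2 : ∀ i k l, ∑ q, B l q / (B i q * B k q) = A k i / (A l i * A l k) := by
    intro i k l
    have e : ∑ p, (∑ m, B m p * A k m / A l m) / B i p = n * (A k i / A l i) := by
      simp only [Finset.sum_div]
      rw [Finset.sum_comm]
      have : ∀ m ∈ Finset.univ, ∑ p, B m p * A k m / A l m / B i p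
          = if m = i then n * (A k i / A l i) else 0 := fun m _ => by
        have : ∑ p, B m p * A k m / A l m / B i p = (∑ p, B m p / B i p) * (A k m / A l m) := by
          rw [Finset.sum_mul]; exact Finset.sum_congr rfl fun p _ => by ring
        rw [this, O1]; split_ifs with hh
        · rw [hh]
        · simp
      rw [Finset.sum_congr rfl this]; simp
    simp only [P1] at e
    have e' : (n * A l k) * ∑ q, B l q / (B i q * B k q) = n * (A k i / A l i) := by
      rw [← e, Finset.mul_sum]
      exact Finset.sum_congr rfl fun p _ => by field_simp [hB k p, hB i p]
    apply mul_left_cancel₀ (mul_ne_zero hn (hA l k))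
    rw [e']
    field_simp [hA l k, hA l i]
  choose S hS using hM
  have hS' : ∀ l i j, ∑ k, M l k * (A k i * B k j) = S i j * (A l i * B l j) := fun l i j =>
    congrFun (hS i j) l
  -- E
  have E : ∀ i l k, ∑ j, S i j * B l j / B k j = n * M l k * A k i / A l i := by
    intro i l k
    have e2 : ∀ j', ∑ q, Bᵀ j' q * (M l q * A q i) = S i j' * (A l i * B l j') := fun j' => by
      rw [← hS']; exact Finset.sum_congr rfl fun q _ => by rw [Matrix.transpose_apply]; ring
    have e3 := inv_row hlT _ _ e2 k
    rw [eq_div_iff (hA l i), show (n:ℂ) * M l k * A k i = n * (M l k * A k i) by ring, e3,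
      Finset.sum_mul, Finset.mul_sum]
    refine Finset.sum_congr rfl fun q _ => ?_
    rw [Matrix.transpose_apply, tB]
    field_simp [hB k q]
  let F : Fin n → Fin n → ℂ := fun p j => ∑ i, B i p * S i j
  have F1 : ∀ p l k, ∑ j, F p j * B l j / B k j = n^2 * M l k * A l k * B l p / B k p := by
    intro p l k
    have : ∑ j, F p j * B l j / B k j = ∑ i, B i p * ∑ j, S i j * B l j / B k j := by
      simp only [F, Finset.sum_mul, Finset.sum_div, Finset.mul_sum]
      rw [Finset.sum_comm]
      exact Finset.sum_congr rfl fun i _ => Finset.sum_congr rfl fun j _ => by ring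
    rw [this]
    simp only [E]
    have e := P1 k l p
    rw [show (n:ℂ)^2 * M l k * A l k * B l p / B k p = n * M l k * (n * A l k * B l p / B k p) by ring,
      ← e, Finset.mul_sum]
    exact Finset.sum_congr rfl fun i _ => by ring
  have F2 : ∀ j l k, ∑ p, F p j * B l p / B k p = n^2 * M k l * A k l * B l j / B k j := by
    intro j l k
    have e : ∀ p, F p j * B l p = n * B l j * ∑ m, M m l * A m l * B m p / B m j := by
      intro p
      have e1 := inv_row hl (fun j => F p j / B l j) (fun m => n^2 * M m l * A m l * B m p / B l p)
        (fun m => by rw [← F1]; exact Finset.sum_congr rfl fun q _ => by ring) j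
      have e2 : F p j * B l p = B l j * B l p * (F p j / B l j) := by
        field_simp [hB l j]
      rw [e2, e1, Finset.mul_sum, Finset.mul_sum]
      refine Finset.sum_congr rfl fun m _ => ?_
      rw [tB]
      field_simp [hB m j, hB l p]
    simp only [e, Finset.mul_sum, Finset.sum_div]
    rw [Finset.sum_comm]
    have : ∀ m ∈ Finset.univ, ∑ p, n * B l j * (M m l * A m l * B m p / B m j) / B k p
        = if m = k then n^2 * M k l * A k l * B l j / B k j else 0 := fun m _ => by
      have : ∑ p, n * B l j * (M m l * A m l * B m p / B m j) / B k p
          = (n * B l j * M m l * A m l / B m j) * ∑ p, B m p / B k p := by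
        rw [Finset.mul_sum]; exact Finset.sum_congr rfl fun p _ => by ring
      rw [this, O1]; split_ifs with hh
      · rw [hh]; ring
      · simp
    rw [Finset.sum_congr rfl this]; simp
  let R : Fin n → Fin n → ℂ := fun i j => (∑ q, F j q / B i q) / n
  have E' : ∀ i l k, ∑ j, R i j * B l j / B k j = n * M k l * A k i / A l i := by
    intro i l k
    have : ∑ j, R i j * B l j / B k j = (∑ q, (∑ j, F j q * B l j / B k j) / B i q) / n := by
      simp only [R, Finset.sum_mul, Finset.sum_div]
      rw [Finset.sum_comm]
      exact Finset.sum_congr rfl fun i _ => Finset.sum_congr rfl fun j _ => by ring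
    rw [this]
    simp only [F2]
    have e := P2 i k l
    have : (∑ q, n^2 * M k l * A k l * B l q / B k q / B i q)
        = n^2 * M k l * A k l * ∑ q, B l q / (B i q * B k q) := by
      rw [Finset.mul_sum]
      exact Finset.sum_congr rfl fun q _ => by field_simp
    rw [this, e, hs k l]
    field_simp [hA l i, hA l k]
  intro i j
  refine ⟨R i j, ?_⟩
  funext l
  show ∑ k, M k l * (A k i * B k j) = R i j * (A l i * B l j)
  have e : ∀ k ∈ Finset.univ, M k l * (A k i * B k j)
      = ∑ q, (A l i / n) * R i q * B l q * (B k j / B k q) := fun k _ => by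
    have : M k l * (A k i * B k j) = (A l i / n) * B k j * (n * M k l * A k i / A l i) := by
      field_simp [hA l i]
    rw [this, ← E', Finset.mul_sum]
    exact Finset.sum_congr rfl fun q _ => by ring
  rw [Finset.sum_congr rfl e, Finset.sum_comm]
  simp only [← Finset.mul_sum, O2]
  simp only [mul_ite, mul_zero, Finset.sum_ite_eq', Finset.mem_univ, if_true]
  field_simp

theorem NAB_eq_NABt {n : ℕ} (hn : 0 < n)
    (A B : Matrix (Fin n) (Fin n) ℂ) (h : IsInvertibleJonesPair A B) :
    ({M : Matrix (Fin n) (Fin n) ℂ | InNomura A B M} =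
      {M : Matrix (Fin n) (Fin n) ℂ | InNomura A Bᵀ M}) ∧
    (Aᵀ = A → ∀ M : Matrix (Fin n) (Fin n) ℂ, InNomura A B M ↔ InNomura A B Mᵀ) := by
  obtain ⟨⟨uA, hB, j1, j2⟩, hA, uB⟩ := h
  have h1 := jp_entry j1
  have h2 := jp_entry j2
  obtain ⟨c1, c2⟩ := swap_cols hA uB h1 h2
  constructor
  · ext M
    constructor
    · intro hM i k
      obtain ⟨q, hq⟩ := c1 k
      have : colProd A Bᵀ i k = colProd A B i q := funext fun j => by
        simp only [colProd, Matrix.transpose_apply, hq]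
      rw [this]; exact hM i q
    · intro hM i k
      obtain ⟨q, hq⟩ := c2 k
      have : colProd A B i k = colProd A Bᵀ i q := funext fun j => by
        simp only [colProd, Matrix.transpose_apply, hq]
      rw [this]; exact hM i q
  · intro hs M
    have hs' : ∀ i j, A i j = A j i := fun i j => (congrFun (congrFun hs j) i)
    have hn' : (n : ℂ) ≠ 0 := Nat.cast_ne_zero.2 hn.ne'
    refine ⟨fun hM => transp_aux hn' hA hB uA uB h1 hs' M hM, fun hM => ?_⟩
    have := transp_aux hn' hA hB uA uB h1 hs' _ hM
    rwa [Matrix.transpose_transpose] at this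
end
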